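/- arXiv:2310.18202 — 2 statements merged into one kernel-verified Lean document; each statement's English description precedes it below -/
import Mathlib

section
/- Let F be a graph with at least one edge and let G be an n-vertex graph that is ε-far from F-free. Then G has a subgraph G' with at least (ε/|V(F)|^{|V(F)|})^{1/2}·n vertices that is uniformly ε/(2·|V(F)|^{|V(F)|})-far from F-free. -/
/-- `G` contains a copy of `F`, i.e. a subgraph isomorphic to `F`
(equivalently an injective graph homomorphism from `F`). -/
def ContainsCopy {α β : Type*} (F : SimpleGraph α) (G : SimpleGraph β) : Prop :=
  ∃ f : F →g G, Function.Injective f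

/-- The number of copies of `H` in `G`, i.e. the number of subgraphs of `G`
isomorphic to `H`. -/
noncomputable def copyCount {α β : Type*} (H : SimpleGraph α) (G : SimpleGraph β) : ℕ :=
  {G' : G.Subgraph | Nonempty (H ≃g G'.coe)}.ncard

/-- `G` is `ε`-far from `F`-free: every graph obtained from `G` by deleting fewer than
`ε·|V(G)|²` edges still contains a copy of `F`. -/
def FarFromFree {α β : Type*} (F : SimpleGraph α) (G : SimpleGraph β) (ε : ℝ) : Prop :=
  ∀ G' : SimpleGraph β, G' ≤ G →
    ((G.edgeSet \ G'.edgeSet).ncard : ℝ) < ε * (Nat.card β : ℝ) ^ 2 →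
    ContainsCopy F G'

/-- `H` is `F`-abundant: there are constants `c, C > 0` such that for every `ε ∈ (0,1)`
and all sufficiently large `n`, every `n`-vertex graph that is `ε`-far from `F`-free
contains at least `c·ε^C·n^{|V(H)|}` copies of `H`. -/
def Abundant {α β : Type*} (F : SimpleGraph α) (H : SimpleGraph β) : Prop :=
  ∃ c C : ℝ, 0 < c ∧ 0 < C ∧ ∀ ε : ℝ, 0 < ε → ε < 1 → ∃ n₀ : ℕ, ∀ n : ℕ, n₀ ≤ n →
    ∀ G : SimpleGraph (Fin n), FarFromFree F G ε →
      c * ε ^ C * (n : ℝ) ^ (Nat.card β) ≤ (copyCount H G : ℝ)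
/-- `f` is a copy map from `F` into `G`: an injective map sending edges to edges. -/
def IsCopyMap {α β : Type*} (F : SimpleGraph α) (G : SimpleGraph β) (f : α → β) : Prop :=
  Function.Injective f ∧ ∀ a b, F.Adj a b → G.Adj (f a) (f b)

/-- `G` is uniformly `ε`-far from `F`-free, with witnessing `F`-partition given by the
homomorphism `π : G →g F` (the parts are `V_i = π⁻¹(i)`): there is a collection `𝒞` of
pairwise edge-disjoint copies of `F` in `G`, each placed so that the vertex playing the
role of `i ∈ V(F)` lies in `V_i`, such that every vertex of `G` lies in at least
`ε·|V(G)|` copies of `F` from `𝒞`. -/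
def UniformlyFarWith {α β : Type*} (F : SimpleGraph α) (G : SimpleGraph β)
    (π : G →g F) (ε : ℝ) : Prop :=
  ∃ 𝒞 : Set (α → β),
    (∀ f ∈ 𝒞, IsCopyMap F G f ∧ ∀ a, π (f a) = a) ∧
    (∀ f ∈ 𝒞, ∀ g ∈ 𝒞, f ≠ g → ∀ a b a' b', F.Adj a b → F.Adj a' b' →
      s(f a, f b) ≠ s(g a', g b')) ∧
    (∀ v : β, ε * (Nat.card β : ℝ) ≤ (({x ∈ 𝒞 | v ∈ Set.range x}).ncard : ℝ))

/-- An `F`-coloured graph `(H, σ)` is `F`-abundant: there are constants `c, C > 0` such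
that for every `ε ∈ (0,1)` and all sufficiently large `n`, every `n`-vertex graph `G`
that is uniformly `ε`-far from `F`-free with `F`-partition induced by `π : G →g F`
contains at least `c·ε^C·n^{|V(H)|}` injective homomorphisms of `H` into `G` mapping
each vertex `v` of `H` into the part `V_{σ(v)}`. -/
def ColouredAbundant {α β : Type*} (F : SimpleGraph α) (H : SimpleGraph β)
    (σ : H →g F) : Prop :=
  ∃ c C : ℝ, 0 < c ∧ 0 < C ∧ ∀ ε : ℝ, 0 < ε → ε < 1 → ∃ n₀ : ℕ, ∀ n : ℕ, n₀ ≤ n →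
    ∀ G : SimpleGraph (Fin n), ∀ π : G →g F, UniformlyFarWith F G π ε →
      c * ε ^ C * (n : ℝ) ^ (Nat.card β) ≤
        (({f : β → Fin n | IsCopyMap H G f ∧ ∀ v, π (f v) = σ v}).ncard : ℝ)

/-!
Colour the vertices of `G` at random by the `k` vertices of `F`; a copy of `F` is *placed* if the
vertex playing the role of `a` gets colour `a`, which happens with probability `k ^ (-k)`. Weigh
the copies so that they are in equilibrium for a conflict kernel bounding the probability that two
overlapping copies are both placed. By a weighted form of Turán's theorem, some colouring places
at least `k ^ (-k)` times the total weight many pairwise edge-disjoint copies. The total weight is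
large because the edges carrying much weight, together with a few others, meet all copies, so that
there are at least `ε * n ^ 2` of them.

Cleaning then restricts to the vertex set `U` maximising the number of placed copies inside `U`
minus a multiple of `#U * (#U + 1)`. Every vertex of `U` lies in many of these copies, and `U` is
large because it contains at most `ν * #U ^ 2` edge-disjoint placed copies, where `ν` depends on
`F`.

With `γ = ε / k ^ k`, the stated constants require `(1 / 4 + ν + O(1 / n)) * γ * n ^ 2` placed
copies. If `F` has three disjoint edges, or an edge disjoint from a path with two edges, then they
come from a conflict kernel that gives larger weights to a few edges of `F`. The remaining `F`,
and the dense ones on five vertices, have so many automorphisms that a maximal edge-disjoint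
family of copies suffices, each of its members being placeable in `#Aut F` ways. For
`n ^ 2 ≤ k ^ (k + 2)` a single copy is enough.
-/

open Finset

section PlacedPackings

variable {α β : Type*}

/-- The edge set of the copy of `F` traced out by a map `f` of its vertices. -/
def edgeImage (F : SimpleGraph α) (f : α → β) : Set (Sym2 β) :=
  Sym2.map f '' F.edgeSet

/-- A family of pairwise edge-disjoint copies of `F` in `G` which is *placed* by the vertex
colouring `π`: the vertex playing the role of `a` has colour `a`. -/
structure IsPlacedPacking (F : SimpleGraph α) (G : SimpleGraph β) (π : β → α)
    (I : Finset (α → β)) : Prop where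
  isCopyMap : ∀ f ∈ I, IsCopyMap F G f
  leftInverse : ∀ f ∈ I, Function.LeftInverse π f
  pairwiseDisjoint : (I : Set (α → β)).PairwiseDisjoint (edgeImage F)

/-- The subgraph of `G` on `U` formed by the edges which the colouring `π` sends to edges
of `F`. -/
def colouredSubgraph (F : SimpleGraph α) (G : SimpleGraph β) (π : β → α) (U : Set β) :
    G.Subgraph where
  verts := U
  Adj u v := u ∈ U ∧ v ∈ U ∧ G.Adj u v ∧ F.Adj (π u) (π v)
  adj_sub h := h.2.2.1
  edge_vert h := h.1
  symm := ⟨fun _ _ h ↦ ⟨h.2.1, h.1, h.2.2.1.symm, h.2.2.2.symm⟩⟩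

/-- The `F`-partition of `colouredSubgraph F G π U` given by the colour classes of `π`. -/
def colouredSubgraphHom (F : SimpleGraph α) (G : SimpleGraph β) (π : β → α) (U : Set β) :
    (colouredSubgraph F G π U).coe →g F where
  toFun v := π v
  map_rel' h := h.2.2.2

/-- The conclusion of the theorem with `γ` in place of `ε / |V(F)| ^ |V(F)|`. -/
def HasUniformlyFarSubgraph (F : SimpleGraph α) (G : SimpleGraph β) (γ : ℝ) : Prop :=
  ∃ G' : G.Subgraph, ∃ π : G'.coe →g F,
    √γ * (Nat.card β : ℝ) ≤ (Nat.card G'.verts : ℝ) ∧ UniformlyFarWith F G'.coe π (γ / 2)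

variable {F : SimpleGraph α} {G : SimpleGraph β} {π : β → α} {I : Finset (α → β)}

theorem IsPlacedPacking.mono {J : Finset (α → β)} (hI : IsPlacedPacking F G π I) (hJ : J ⊆ I) :
    IsPlacedPacking F G π J where
  isCopyMap f hf := hI.isCopyMap f (hJ hf)
  leftInverse f hf := hI.leftInverse f (hJ hf)
  pairwiseDisjoint := hI.pairwiseDisjoint.subset (coe_subset.2 hJ)

theorem edgeImage_disjoint_iff {f g : α → β} : Disjoint (edgeImage F f) (edgeImage F g) ↔
    ∀ a b a' b', F.Adj a b → F.Adj a' b' → s(f a, f b) ≠ s(g a', g b') := by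
  simp only [Set.disjoint_left, edgeImage, Set.mem_image, not_exists, not_and]
  refine ⟨fun h a b a' b' hab hab' he ↦ h ⟨s(a, b), hab, rfl⟩ s(a', b') hab' he.symm, ?_⟩
  rintro h _ ⟨⟨a, b⟩, hab, rfl⟩ ⟨a', b'⟩ hab' he
  exact h a b a' b' hab hab' he.symm

theorem card_verts_colouredSubgraph (U : Finset β) :
    Nat.card (colouredSubgraph F G π U).verts = #U :=
  (Nat.card_coe_set_eq (U : Set β)).trans (Set.ncard_coe_finset U)

open Classical in
theorem IsPlacedPacking.uniformlyFarWith (hI : IsPlacedPacking F G π I) {U : Finset β} {δ : ℝ}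
    (hU : ∀ f ∈ I, Set.range f ⊆ U)
    (hdeg : ∀ v ∈ U, δ * #U ≤ #{f ∈ I | v ∈ Set.range f}) :
    UniformlyFarWith F (colouredSubgraph F G π U).coe (colouredSubgraphHom F G π U) δ := by
  refine ⟨{g | Subtype.val ∘ g ∈ I}, fun g hg ↦ ⟨⟨?_, ?_⟩, hI.leftInverse _ hg⟩, ?_, fun v ↦ ?_⟩
  · exact (hI.isCopyMap _ hg).1.of_comp
  · intro a b hab
    have hπ := hI.leftInverse _ hg
    refine ⟨(g a).2, (g b).2, (hI.isCopyMap _ hg).2 a b hab, ?_⟩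
    exact (congrArg₂ F.Adj (hπ a) (hπ b)).mpr hab
  · intro f hf g hg hfg a b a' b' hab hab' he
    have hne : Subtype.val ∘ f ≠ Subtype.val ∘ g :=
      fun h ↦ hfg (Subtype.val_injective.comp_left h)
    exact edgeImage_disjoint_iff.1 (hI.pairwiseDisjoint hf hg hne) a b a' b' hab hab'
      (congrArg (Sym2.map Subtype.val) he)
  · have himage : (fun g : α → (U : Set β) ↦ (Subtype.val ∘ g : α → β)) ''
        {g ∈ {g | Subtype.val ∘ g ∈ I} | v ∈ Set.range g} =
        ({f ∈ I | v.1 ∈ Set.range f} : Finset (α → β)) := by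
      ext f
      simp only [Set.mem_image, Set.mem_ofPred_eq, coe_filter, Set.mem_range]
      constructor
      · rintro ⟨g, ⟨hg, a, rfl⟩, rfl⟩
        exact ⟨hg, a, rfl⟩
      · rintro ⟨hf, a, ha⟩
        exact ⟨fun b ↦ ⟨f b, hU f hf ⟨b, rfl⟩⟩, ⟨hf, a, Subtype.ext ha⟩, rfl⟩
    have hcard := Set.ncard_image_of_injective
      {g : α → (U : Set β) | g ∈ {g | Subtype.val ∘ g ∈ I} ∧ v ∈ Set.range g}
      (Subtype.val_injective.comp_left (α := α))
    rw [card_verts_colouredSubgraph]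
    refine (hdeg v v.2).trans_eq ?_
    rw [← Set.ncard_coe_finset, ← himage]
    exact_mod_cast hcard

open Classical in
theorem IsPlacedPacking.hasUniformlyFarSubgraph (hI : IsPlacedPacking F G π I) {U : Finset β}
    {γ : ℝ} (hU : ∀ f ∈ I, Set.range f ⊆ U)
    (hdeg : ∀ v ∈ U, γ / 2 * #U ≤ #{f ∈ I | v ∈ Set.range f})
    (hcard : γ * (Nat.card β : ℝ) ^ 2 ≤ (#U : ℝ) ^ 2) : HasUniformlyFarSubgraph F G γ := by
  refine ⟨_, _, ?_, hI.uniformlyFarWith hU hdeg⟩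
  rw [card_verts_colouredSubgraph, ← Real.sqrt_sq (Nat.cast_nonneg (α := ℝ) (Nat.card β)),
    ← Real.sqrt_mul' _ (sq_nonneg _)]
  exact Real.sqrt_le_iff.2 ⟨Nat.cast_nonneg _, hcard⟩

end PlacedPackings

section Cleaning

/-- `F` forces `q ≤ ν · |U|²` whenever the vertex set `U` is split into classes indexed by `V(F)`
such that any two classes joined by an edge of `F` have product of sizes at least `q`. -/
def EdgeProductBound {α : Type*} [Fintype α] (F : SimpleGraph α) (ν : ℝ) : Prop :=
  ∀ (w : α → ℝ) (q : ℝ), (∀ a, 0 ≤ w a) → (∀ a b, F.Adj a b → q ≤ w a * w b) →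
    q ≤ ν * (∑ a, w a) ^ 2

open Classical in
-- `U` maximises `#{i ∈ I | s i ⊆ U} - δ · #U · (#U + 1) / 2`, so removing a vertex does not help.
theorem exists_finset_forall_le_degree {ι β : Type*} [Fintype β] (I : Finset ι) (s : ι → Set β)
    (δ : ℝ) : ∃ U : Finset β,
      (∀ v ∈ U, δ * #U ≤ #{i ∈ I | s i ⊆ U ∧ v ∈ s i}) ∧
      #I - δ * (Fintype.card β * (Fintype.card β + 1) / 2) ≤
        #{i ∈ I | s i ⊆ U} - δ * (#U * (#U + 1) / 2) := by
  let Φ : Finset β → ℝ := fun U ↦ #{i ∈ I | s i ⊆ U} - δ * (#U * (#U + 1) / 2)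
  obtain ⟨U, -, hU⟩ := exists_max_image univ Φ univ_nonempty
  refine ⟨U, fun v hv ↦ ?_, by simpa [Φ] using hU univ (mem_univ _)⟩
  have hsplit : #{i ∈ I | s i ⊆ U} =
      #{i ∈ I | s i ⊆ U ∧ v ∈ s i} + #{i ∈ I | s i ⊆ (U.erase v : Finset β)} := by
    rw [← card_filter_add_card_filter_not (s := {i ∈ I | s i ⊆ U}) (fun i ↦ v ∈ s i),
      filter_filter, filter_filter]
    simp only [coe_erase, Set.subset_sdiff, Set.disjoint_singleton_right]
  have hmax : Φ (U.erase v) ≤ Φ U := hU _ (mem_univ _)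
  simp only [Φ, hsplit, cast_card_erase_of_mem hv] at hmax
  push_cast at hmax
  linarith

variable {α β : Type*} {F : SimpleGraph α} {G : SimpleGraph β} {π : β → α} {I : Finset (α → β)}

open Classical in
theorem IsPlacedPacking.card_le_of_adj (hI : IsPlacedPacking F G π I) {U : Finset β}
    (hU : ∀ f ∈ I, Set.range f ⊆ U) {a b : α} (hab : F.Adj a b) :
    #I ≤ #{v ∈ U | π v = a} * #{v ∈ U | π v = b} := by
  rw [← card_product]
  refine card_le_card_of_injOn (fun f ↦ (f a, f b)) (fun f hf ↦ ?_) fun f hf g hg hfg ↦ ?_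
  · have hmem (c : α) : f c ∈ {v ∈ U | π v = c} :=
      mem_filter.2 ⟨mem_coe.1 (hU f hf ⟨c, rfl⟩), hI.leftInverse f hf c⟩
    exact mem_product.2 ⟨hmem a, hmem b⟩
  · by_contra hne
    obtain ⟨ha, hb⟩ := Prod.mk.inj hfg
    exact edgeImage_disjoint_iff.1 (hI.pairwiseDisjoint hf hg hne) a b a b hab hab
      (by rw [ha, hb])

open Classical in
theorem IsPlacedPacking.card_le [Fintype α] (hI : IsPlacedPacking F G π I) {U : Finset β} {ν : ℝ}
    (hU : ∀ f ∈ I, Set.range f ⊆ U) (hν : EdgeProductBound F ν) :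
    #I ≤ ν * (#U : ℝ) ^ 2 := by
  have hsum : ∑ a, (#{v ∈ U | π v = a} : ℝ) = #U := by
    exact_mod_cast (card_eq_sum_card_fiberwise fun v _ ↦ mem_univ (π v)).symm
  rw [← hsum]
  exact hν _ _ (fun a ↦ Nat.cast_nonneg _) fun a b hab ↦
    mod_cast hI.card_le_of_adj hU hab

open Classical in
theorem IsPlacedPacking.hasUniformlyFarSubgraph_of_le_card [Fintype α] [Fintype β]
    (hI : IsPlacedPacking F G π I) {ν γ : ℝ} (hν₀ : 0 < ν) (hγ : 0 ≤ γ)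
    (hν : EdgeProductBound F ν)
    (hcard : (1 / 4 + ν + 1 / (4 * Fintype.card β)) * (γ * (Fintype.card β : ℝ) ^ 2) ≤ #I) :
    HasUniformlyFarSubgraph F G γ := by
  obtain ⟨U, hdeg, hU⟩ := exists_finset_forall_le_degree I (fun f ↦ Set.range f) (γ / 2)
  have hsub : ∀ f ∈ ({f ∈ I | Set.range f ⊆ U} : Finset (α → β)), Set.range f ⊆ U :=
    fun f hf ↦ (mem_filter.1 hf).2
  have hI' := hI.mono (filter_subset (fun f ↦ Set.range f ⊆ (U : Set β)) I)
  refine hI'.hasUniformlyFarSubgraph hsub (fun v hv ↦ ?_) ?_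
  · simpa only [filter_filter] using hdeg v hv
  · rw [Nat.card_eq_fintype_card]
    have hle := hI'.card_le hsub hν
    set n : ℝ := (Fintype.card β : ℝ)
    have hn : 0 ≤ n := Nat.cast_nonneg _
    have hmass : (1 / 4 + ν) * (γ * n ^ 2) + γ * n / 4 ≤ #I := by
      refine Eq.trans_le ?_ hcard
      rcases hn.eq_or_lt with h | h
      · simp [← h]
      · field_simp
    refine le_of_mul_le_mul_left ?_ hν₀
    have : 0 ≤ γ / 2 * (#U * (#U + 1) / 2) := by positivity
    linarith

end Cleaning

section IndependentSets

variable {X : Type*} {r : X → X → Prop} [DecidableRel r] {w : X → ℝ}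

-- A weighted form of Turán's theorem, in the spirit of Motzkin and Straus: greedily choose a point
-- `v` whose neighbourhood has least weight `m`; deleting that neighbourhood lowers the left-hand
-- side by at most `2 * m - m ^ 2 ≤ 1`.
theorem exists_independent_subset (hrefl : ∀ x, r x x) (hsymm : ∀ x y, r x y → r y x)
    (hw : ∀ x, 0 ≤ w x) (P : Finset X) : ∃ I ⊆ P, (I : Set X).Pairwise (fun x y ↦ ¬ r x y) ∧
      2 * ∑ x ∈ P, w x - ∑ x ∈ P, ∑ y ∈ P with r x y, w x * w y ≤ #I := by
  classical
  induction P using Finset.strongInduction with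
  | H P ih =>
    obtain rfl | hP := P.eq_empty_or_nonempty
    · exact ⟨∅, Subset.rfl, by simp, by simp⟩
    obtain ⟨v, hv, hmin⟩ := exists_min_image P (fun x ↦ ∑ y ∈ P with r x y, w y) hP
    set B := {y ∈ P | r v y}
    set m := ∑ y ∈ B, w y
    have hvB : v ∈ B := mem_filter.2 ⟨hv, hrefl v⟩
    have hBP : B ⊆ P := filter_subset _ _
    obtain ⟨I, hIP, hI, hcard⟩ := ih (P \ B) (sdiff_ssubset hBP ⟨v, hvB⟩)
    have hvI : v ∉ I := fun h ↦ (mem_sdiff.1 (hIP h)).2 hvB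
    refine ⟨insert v I, insert_subset hv (hIP.trans sdiff_subset), ?_, ?_⟩
    · have hvy : ∀ y ∈ I, ¬ r v y := fun y hy hvy ↦
        (mem_sdiff.1 (hIP hy)).2 (mem_filter.2 ⟨(mem_sdiff.1 (hIP hy)).1, hvy⟩)
      rw [coe_insert, Set.pairwise_insert_of_notMem hvI]
      exact ⟨hI, fun y hy ↦ ⟨hvy y hy, fun hyv ↦ hvy y hy (hsymm y v hyv)⟩⟩
    have hnear : m * m ≤ ∑ x ∈ B, ∑ y ∈ P with r x y, w x * w y := by
      rw [sum_mul]
      exact sum_le_sum fun x hx ↦ (mul_le_mul_of_nonneg_left (hmin x (hBP hx)) (hw x)).trans_eq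
        (mul_sum _ _ _)
    have hfar : ∑ x ∈ P \ B, ∑ y ∈ P \ B with r x y, w x * w y ≤
        ∑ x ∈ P \ B, ∑ y ∈ P with r x y, w x * w y :=
      sum_le_sum fun x _ ↦ sum_le_sum_of_subset_of_nonneg (filter_subset_filter _ sdiff_subset)
        fun y _ _ ↦ mul_nonneg (hw x) (hw y)
    have hw_split : ∑ x ∈ P \ B, w x + m = ∑ x ∈ P, w x := sum_sdiff hBP
    rw [← sum_sdiff (f := fun x ↦ ∑ y ∈ P with r x y, w x * w y) hBP, ← hw_split,
      card_insert_of_notMem hvI]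
    push_cast
    linarith [sq_nonneg (m - 1)]

end IndependentSets

section RandomColourings

variable {α β : Type*} [Fintype α] [Fintype β]

open Classical in
theorem card_filter_forall_mem_eq (U : Finset β) (p : β → α) :
    #{π : β → α | ∀ u ∈ U, π u = p u} * Fintype.card α ^ #U =
      Fintype.card α ^ Fintype.card β := by
  have hpi : ({π : β → α | ∀ u ∈ U, π u = p u} : Finset (β → α)) =
      Fintype.piFinset fun u ↦ if u ∈ U then {p u} else univ := by
    ext π
    simp only [mem_filter, mem_univ, true_and, Fintype.mem_piFinset]
    refine forall_congr' fun u ↦ ?_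
    split_ifs with hu <;> simp [hu]
  rw [hpi, Fintype.card_piFinset]
  simp only [apply_ite card, card_singleton, card_univ]
  rw [prod_ite, prod_const_one, one_mul, prod_const, filter_not, filter_univ_mem,
    ← compl_eq_univ_sdiff, ← pow_add, card_compl_add_card]

open Classical in
theorem card_filter_leftInverse {f : α → β} (hf : Function.Injective f) :
    #{π : β → α | Function.LeftInverse π f} * Fintype.card α ^ Fintype.card α =
      Fintype.card α ^ Fintype.card β := by
  cases isEmpty_or_nonempty α
  · have (π : β → α) : Function.LeftInverse π f := isEmptyElim
    simp [this]
  have h := card_filter_forall_mem_eq (univ.image f) (Function.invFun f)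
  rw [card_image_of_injective _ hf, card_univ] at h
  simpa [Function.leftInverse_invFun hf _, Function.LeftInverse] using h

open Classical in
theorem card_filter_leftInverse_and_mul_le {f g : α → β} (hf : Function.Injective f)
    (hg : Function.Injective g) :
    #{π : β → α | Function.LeftInverse π f ∧ Function.LeftInverse π g} *
      Fintype.card α ^ (Fintype.card α + #{a | f a ≠ g a}) ≤
      Fintype.card α ^ Fintype.card β := by
  by_cases hne : ∃ p : β → α, Function.LeftInverse p f ∧ Function.LeftInverse p g
  · obtain ⟨p, hpf, hpg⟩ := hne
    have hdisj : Disjoint (univ.image f) (({a | f a ≠ g a} : Finset α).image g) := by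
      simp only [disjoint_left, mem_image, mem_filter, mem_univ, true_and]
      rintro _ ⟨a, rfl⟩ ⟨b, hb, hba⟩
      have hab : a = b := by rw [← hpf a, ← hba, hpg]
      exact hb (hab ▸ hba.symm)
    have h := card_filter_forall_mem_eq (univ.image f ∪ ({a | f a ≠ g a} : Finset α).image g) p
    rw [card_union_of_disjoint hdisj, card_image_of_injective _ hf, card_image_of_injective _ hg,
      card_univ] at h
    rw [← h]
    refine Nat.mul_le_mul_right _ (card_le_card fun π hπ ↦ ?_)
    simp only [mem_filter, mem_univ, true_and, mem_union, mem_image] at hπ ⊢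
    rintro _ (⟨a, rfl⟩ | ⟨a, -, rfl⟩)
    · rw [hπ.1, hpf]
    · rw [hπ.2, hpg]
  · have hempty : ({π | Function.LeftInverse π f ∧ Function.LeftInverse π g} :
        Finset (β → α)) = ∅ :=
      filter_eq_empty_iff.2 fun π _ hπ ↦ hne ⟨π, hπ⟩
    simp [hempty]

end RandomColourings

section WeightedPackings

theorem not_disjoint_edgeImage_self {α β : Type*} {F : SimpleGraph α} (hF : F.edgeSet.Nonempty)
    (f : α → β) :
    ¬ Disjoint (edgeImage F f) (edgeImage F f) :=
  fun h ↦ (hF.image _).ne_empty (disjoint_self.1 h)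

variable {α β : Type*} [Fintype α] [Fintype β] {F : SimpleGraph α} {G : SimpleGraph β}

theorem sum_sum_sum_filter_eq {ι X : Type*} [Fintype ι] (p : ι → X → Prop) (r : X → X → Prop)
    [∀ i x, Decidable (p i x)] [DecidableRel r] (Y : Finset X) (c : X → X → ℝ) :
    ∑ i, ∑ x ∈ Y with p i x, ∑ y ∈ {y ∈ Y | p i y} with r x y, c x y =
      ∑ x ∈ Y, ∑ y ∈ Y with r x y, #{i | p i x ∧ p i y} * c x y := by
  have hite (i : ι) : ∑ x ∈ Y with p i x, ∑ y ∈ {y ∈ Y | p i y} with r x y, c x y =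
      ∑ x ∈ Y, ∑ y ∈ Y with r x y, if p i x ∧ p i y then c x y else 0 := by
    simp only [sum_filter, ite_and, sum_ite_irrel, sum_const_zero]
    refine sum_congr rfl fun x _ ↦ ?_
    split_ifs
    · exact sum_congr rfl fun y _ ↦ by split_ifs <;> rfl
    · simp
  simp only [hite]
  rw [sum_comm]
  refine sum_congr rfl fun x _ ↦ ?_
  rw [sum_comm]
  refine sum_congr rfl fun y _ ↦ ?_
  rw [← sum_filter, sum_const, nsmul_eq_mul]

open Classical in
theorem mul_sum_sum_filter_leftInverse {Y : Finset (α → β)}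
    (hY : ∀ f ∈ Y, Function.Injective f) (w : (α → β) → ℝ) :
    (Fintype.card α : ℝ) ^ Fintype.card α *
        ∑ π : β → α, ∑ f ∈ Y with Function.LeftInverse π f, w f =
      (Fintype.card α : ℝ) ^ Fintype.card β * ∑ f ∈ Y, w f := by
  simp only [sum_filter]
  rw [sum_comm, mul_sum, mul_sum]
  refine sum_congr rfl fun f hf ↦ ?_
  rw [← sum_filter, sum_const, nsmul_eq_mul, ← mul_assoc, mul_comm (_ ^ _)]
  congr 1
  exact_mod_cast card_filter_leftInverse (hY f hf)

open Classical in
-- Colour the vertices at random: in expectation, the weights of the copies placed by the colouring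
-- beat the conflicts among them, and an independent set of the conflict graph is a packing.
theorem exists_isPlacedPacking_of_kernel (hF : F.edgeSet.Nonempty) {Y : Finset (α → β)}
    (hY : ∀ f ∈ Y, IsCopyMap F G f) {w : (α → β) → ℝ} (hw : ∀ f, 0 ≤ w f)
    {κ : (α → β) → (α → β) → ℝ} (hκ₀ : ∀ f g, 0 ≤ κ f g)
    (hκ : ∀ f ∈ Y, ∀ g ∈ Y, ¬ Disjoint (edgeImage F f) (edgeImage F g) →
      (#{π : β → α | Function.LeftInverse π f ∧ Function.LeftInverse π g} : ℝ) *
        (Fintype.card α : ℝ) ^ Fintype.card α ≤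
          κ f g * (Fintype.card α : ℝ) ^ Fintype.card β) :
    ∃ π I, IsPlacedPacking F G π I ∧
      2 * ∑ f ∈ Y, w f - ∑ f ∈ Y, ∑ g ∈ Y, κ f g * (w f * w g) ≤
        (Fintype.card α : ℝ) ^ Fintype.card α * #I := by
  set q : ℝ := (Fintype.card α : ℝ) ^ Fintype.card α
  set N : ℝ := (Fintype.card α : ℝ) ^ Fintype.card β
  let r (f g : α → β) : Prop := ¬ Disjoint (edgeImage F f) (edgeImage F g)
  let P (π : β → α) : Finset (α → β) := {f ∈ Y | Function.LeftInverse π f}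
  choose I hIP hI hcard using fun π ↦ exists_independent_subset (r := r) (w := w)
    (not_disjoint_edgeImage_self hF) (fun f g h h' ↦ h h'.symm) hw (P π)
  have hlinear : q * ∑ π, ∑ f ∈ P π, w f = N * ∑ f ∈ Y, w f :=
    mul_sum_sum_filter_leftInverse (fun f hf ↦ (hY f hf).1) w
  have hquadratic : q * ∑ π, ∑ f ∈ P π, ∑ g ∈ P π with r f g, w f * w g ≤
      N * ∑ f ∈ Y, ∑ g ∈ Y, κ f g * (w f * w g) := by
    rw [sum_sum_sum_filter_eq Function.LeftInverse r, mul_sum, mul_sum]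
    refine sum_le_sum fun f hf ↦ ?_
    rw [mul_sum, mul_sum, sum_filter]
    refine sum_le_sum fun g hg ↦ ?_
    have hwfg := mul_nonneg (hw f) (hw g)
    split_ifs with hfg
    · calc _ = #{π : β → α | Function.LeftInverse π f ∧ Function.LeftInverse π g} * q *
            (w f * w g) := by ring
        _ ≤ κ f g * N * (w f * w g) := mul_le_mul_of_nonneg_right (hκ f hf g hg hfg) hwfg
        _ = _ := by ring
    · exact mul_nonneg (by positivity) (mul_nonneg (hκ₀ f g) hwfg)
  have havg : ∑ _π : β → α, (2 * ∑ f ∈ Y, w f - ∑ f ∈ Y, ∑ g ∈ Y, κ f g * (w f * w g)) ≤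
      ∑ π, q * #(I π) := by
    calc _ = N * (2 * ∑ f ∈ Y, w f - ∑ f ∈ Y, ∑ g ∈ Y, κ f g * (w f * w g)) := by
          rw [sum_const, nsmul_eq_mul, card_univ, Fintype.card_fun, Nat.cast_pow]
      _ ≤ ∑ π, q * (2 * ∑ f ∈ P π, w f - ∑ f ∈ P π, ∑ g ∈ P π with r f g, w f * w g) := by
          simp only [mul_sub, sum_sub_distrib, mul_left_comm _ (2 : ℝ), ← mul_sum, ← hlinear] at *
          linarith
      _ ≤ _ := sum_le_sum fun π _ ↦ mul_le_mul_of_nonneg_left (hcard π) (by positivity)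
  have : Nonempty α := let ⟨e, _⟩ := hF; ⟨e.out.1⟩
  obtain ⟨π, -, hπ⟩ := exists_le_of_sum_le univ_nonempty havg
  refine ⟨π, I π, ⟨fun f hf ↦ hY f (mem_filter.1 (hIP π hf)).1,
    fun f hf ↦ (mem_filter.1 (hIP π hf)).2, fun f hf g hg hfg ↦ not_not.1 (hI π hf hg hfg)⟩, hπ⟩

theorem FarFromFree.le_card {α β : Type*} [Finite β] {F : SimpleGraph α} {G : SimpleGraph β}
    {ε : ℝ} (h : FarFromFree F G ε) {H : Finset (Sym2 β)}
    (hH : ∀ f, IsCopyMap F G f → ∃ e ∈ F.edgeSet, Sym2.map f e ∈ H) :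
    ε * (Nat.card β : ℝ) ^ 2 ≤ #H := by
  by_contra! hlt
  have hsub : G.edgeSet \ (G.deleteEdges H).edgeSet ⊆ H := by
    rw [SimpleGraph.edgeSet_deleteEdges, Set.sdiff_sdiff_right_self]
    exact Set.inter_subset_right
  obtain ⟨f, hf⟩ := h (G.deleteEdges H) (G.deleteEdges_le _) <| hlt.trans_le' <| by
    rw [← Set.ncard_coe_finset]
    exact_mod_cast Set.ncard_le_ncard hsub H.finite_toSet
  obtain ⟨e, he, heH⟩ := hH f ⟨hf, fun a b hab ↦ G.deleteEdges_le _ (f.map_adj hab)⟩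
  induction e with
  | h a b => exact (SimpleGraph.deleteEdges_adj.1 (f.map_adj he)).2 heH

end WeightedPackings

section Equilibrium

variable {X : Type*} {K : X → X → ℝ}

open Classical in
theorem energy_add_single (hK : ∀ x y, K x y = K y x) {Y : Finset X} {x : X} (hx : x ∈ Y)
    (w : X → ℝ) (t : ℝ) :
    ∑ u ∈ Y, ∑ v ∈ Y, K u v *
        ((w u + Pi.single (M := fun _ ↦ ℝ) x t u) * (w v + Pi.single (M := fun _ ↦ ℝ) x t v)) =
      ∑ u ∈ Y, ∑ v ∈ Y, K u v * (w u * w v) + 2 * t * ∑ v ∈ Y, K x v * w v + t ^ 2 * K x x := by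
  simp only [Pi.single_apply, add_mul, mul_add, sum_add_distrib, mul_ite, ite_mul,
    mul_zero, zero_mul, sum_ite_eq', hx, if_true, sum_ite_irrel, sum_const_zero]
  simp only [hK _ x]
  have hcross : 2 * t * ∑ v ∈ Y, K x v * w v =
      ∑ v ∈ Y, K x v * (t * w v) + ∑ v ∈ Y, K x v * (w v * t) := by
    rw [mul_sum, ← sum_add_distrib]
    exact sum_congr rfl fun v _ ↦ by ring
  rw [hcross]
  ring

theorem two_mul_mul_le_sq_of_isMaxOn (hK : ∀ x y, K x y = K y x) (hK₁ : ∀ x, K x x = 1)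
    {Y : Finset X} {w : X → ℝ} (hw : w ∈ Set.Icc 0 1)
    (hmax : IsMaxOn (fun w : X → ℝ ↦ 2 * ∑ x ∈ Y, w x - ∑ x ∈ Y, ∑ y ∈ Y, K x y * (w x * w y))
      (Set.Icc 0 1) w) {x : X} (hx : x ∈ Y) {t : ℝ} (ht₀ : 0 ≤ w x + t) (ht₁ : w x + t ≤ 1) :
    2 * t * (1 - ∑ y ∈ Y, K x y * w y) ≤ t ^ 2 := by
  classical
  have hmem : w + Pi.single x t ∈ Set.Icc (0 : X → ℝ) 1 := by
    refine ⟨fun y ↦ ?_, fun y ↦ ?_⟩ <;> obtain rfl | hy := eq_or_ne y x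
    · simpa using ht₀
    · simpa [hy] using hw.1 y
    · simpa using ht₁
    · simpa [hy] using hw.2 y
  have h := isMaxOn_iff.1 hmax _ hmem
  simp only [Pi.add_apply, energy_add_single hK hx, hK₁, sum_add_distrib, sum_pi_single', hx,
    if_true] at h
  linarith

theorem exists_equilibrium (hK : ∀ x y, K x y = K y x) (hK₀ : ∀ x y, 0 ≤ K x y)
    (hK₁ : ∀ x, K x x = 1) (Y : Finset X) :
    ∃ w : X → ℝ, (∀ x, 0 ≤ w x) ∧ (∀ x ∈ Y, 1 ≤ ∑ y ∈ Y, K x y * w y) ∧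
      2 * ∑ x ∈ Y, w x - ∑ x ∈ Y, ∑ y ∈ Y, K x y * (w x * w y) = ∑ x ∈ Y, w x := by
  let Φ (w : X → ℝ) : ℝ := 2 * ∑ x ∈ Y, w x - ∑ x ∈ Y, ∑ y ∈ Y, K x y * (w x * w y)
  obtain ⟨w, hw, hmax⟩ := (isCompact_Icc (a := (0 : X → ℝ)) (b := 1)).exists_isMaxOn
    ⟨0, Set.left_mem_Icc.2 zero_le_one⟩ (f := Φ) (by fun_prop)
  have hw₀ : ∀ x, 0 ≤ w x := hw.1
  have hmove {x : X} (hx : x ∈ Y) {t : ℝ} := two_mul_mul_le_sq_of_isMaxOn hK hK₁ hw hmax hx (t := t)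
  have hge : ∀ x ∈ Y, 1 ≤ ∑ y ∈ Y, K x y * w y := by
    intro x hx
    by_contra! hlt
    have hself : w x ≤ ∑ y ∈ Y, K x y * w y := by
      simpa only [hK₁, one_mul] using
        single_le_sum (fun y _ ↦ mul_nonneg (hK₀ x y) (hw₀ y)) hx
    have := hmove hx (t := 1 - ∑ y ∈ Y, K x y * w y) (by linarith [hw₀ x]) (by linarith)
    nlinarith
  have heq : ∀ x ∈ Y, w x * ∑ y ∈ Y, K x y * w y = w x := by
    intro x hx
    by_contra hne
    have hpos : 0 < w x := (hw₀ x).lt_of_ne' fun h ↦ hne (by simp [h])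
    have hgt : 1 < ∑ y ∈ Y, K x y * w y := (hge x hx).lt_of_ne fun h ↦ hne (by rw [← h, mul_one])
    set m := min (w x) (∑ y ∈ Y, K x y * w y - 1)
    have hm₀ : 0 < m := lt_min hpos (by linarith)
    have hmw : m ≤ w x := min_le_left _ _
    have hms : m ≤ ∑ y ∈ Y, K x y * w y - 1 := min_le_right _ _
    have := hmove hx (t := -m) (by linarith) (by have : w x ≤ 1 := hw.2 x; linarith)
    nlinarith
  refine ⟨w, hw₀, hge, ?_⟩
  have hself : ∑ x ∈ Y, ∑ y ∈ Y, K x y * (w x * w y) = ∑ x ∈ Y, w x :=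
    sum_congr rfl fun x hx ↦ by
      conv_rhs => rw [← heq x hx, mul_sum]
      exact sum_congr rfl fun y _ ↦ by ring
  rw [hself]
  ring

end Equilibrium

section Covers

variable {X E V : Type*} [DecidableEq V] {Y : Finset X} {S : Finset E} {φ : X → E → V} {w : X → ℝ}
  {a : E → ℝ}

open Classical in
theorem mul_card_le_of_heavy (hw : ∀ x, 0 ≤ w x) (ha : ∀ e ∈ S, 0 ≤ a e) {r : ℝ} {H : Finset V}
    (hH : ∀ v ∈ H, ∃ e ∈ S, r ≤ a e * ∑ x ∈ Y with φ x e = v, w x) :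
    r * #H ≤ (∑ e ∈ S, a e) * ∑ x ∈ Y with ∃ e ∈ S, φ x e ∈ H, w x := by
  calc r * #H = ∑ _v ∈ H, r := by rw [sum_const, nsmul_eq_mul, mul_comm]
    _ ≤ ∑ v ∈ H, ∑ e ∈ S, a e * ∑ x ∈ Y with φ x e = v, w x := by
        refine sum_le_sum fun v hv ↦ ?_
        obtain ⟨e, he, hr⟩ := hH v hv
        exact hr.trans <| single_le_sum (f := fun e ↦ a e * ∑ x ∈ Y with φ x e = v, w x)
          (fun e he ↦ mul_nonneg (ha e he) (sum_nonneg fun x _ ↦ hw x)) he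
    _ = ∑ e ∈ S, a e * ∑ x ∈ Y with φ x e ∈ H, w x := by
        rw [sum_comm]
        exact sum_congr rfl fun e _ ↦ by rw [← mul_sum, sum_fiberwise_eq_sum_filter]
    _ ≤ ∑ e ∈ S, a e * ∑ x ∈ Y with ∃ e ∈ S, φ x e ∈ H, w x := by
        refine sum_le_sum fun e he ↦ mul_le_mul_of_nonneg_left ?_ (ha e he)
        exact sum_le_sum_of_subset_of_nonneg
          (monotone_filter_right _ fun x _ hx ↦ ⟨e, he, hx⟩) fun x _ _ ↦ hw x
    _ = _ := (sum_mul _ _ _).symm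

open Classical in
theorem one_le_mul_of_light {x : X} (hw : 0 ≤ w x) (ha : ∀ e ∈ S, 0 ≤ a e) {y : ℝ}
    (hy : y ≤ ∑ e ∈ S, a e ^ 2) (hy₁ : y < 1)
    (hcond : 1 ≤ w x + ∑ e ∈ S, a e ^ 2 * (∑ x' ∈ Y with φ x' e = φ x e, w x' - w x))
    (hlight : ∀ e ∈ S, a e * ∑ x' ∈ Y with φ x' e = φ x e, w x' ≤
      (∑ e ∈ S, a e) / (1 - y + (∑ e ∈ S, a e) ^ 2)) :
    1 ≤ (1 - y + (∑ e ∈ S, a e) ^ 2) * w x := by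
  set C := ∑ e ∈ S, a e
  set h := 1 - y + C ^ 2
  have hh₀ : 0 < h := by have := sq_nonneg C; linarith
  have hsum : ∑ e ∈ S, a e ^ 2 * (∑ x' ∈ Y with φ x' e = φ x e, w x' - w x) ≤
      C * (C / h) - (∑ e ∈ S, a e ^ 2) * w x := by
    rw [sum_mul, sum_mul, ← sum_sub_distrib]
    refine sum_le_sum fun e he ↦ ?_
    have := mul_le_mul_of_nonneg_left (hlight e he) (ha e he)
    linarith
  have hCh : C * (C / h) * h = C ^ 2 := by field_simp
  have hwy := mul_le_mul_of_nonneg_right hy hw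
  have hone : 1 ≤ (1 - y) * w x + C * (C / h) := by linarith
  have hmul : (1 - y) * 1 ≤ (1 - y) * (h * w x) := by
    have := mul_le_mul_of_nonneg_right hone hh₀.le
    linarith [show h = 1 - y + C ^ 2 from rfl]
  exact le_of_mul_le_mul_left hmul (by linarith)

open Classical in
-- Cover by the heavy vertices, those on which the members of `Y` through them put much weight, and
-- by one vertex for each member of `Y` that is left, since those have weight at least `1 / h`.
theorem exists_cover [Finite V] (hS : S.Nonempty) (hw : ∀ x, 0 ≤ w x) (ha : ∀ e ∈ S, 0 < a e)
    {y : ℝ} (hy : y ≤ ∑ e ∈ S, a e ^ 2) (hy₁ : y < 1)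
    (hcond : ∀ x ∈ Y,
      1 ≤ w x + ∑ e ∈ S, a e ^ 2 * (∑ x' ∈ Y with φ x' e = φ x e, w x' - w x)) :
    ∃ H : Finset V, (∀ x ∈ Y, ∃ e ∈ S, φ x e ∈ H) ∧
      #H ≤ (1 - y + (∑ e ∈ S, a e) ^ 2) * ∑ x ∈ Y, w x := by
  cases nonempty_fintype V
  set C := ∑ e ∈ S, a e
  set h := 1 - y + C ^ 2
  have hC : 0 < C := sum_pos ha hS
  have hh₀ : 0 < h := by have := sq_nonneg C; linarith
  obtain ⟨e₀, he₀⟩ := hS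
  let H₀ : Finset V := {v | ∃ e ∈ S, C / h ≤ a e * ∑ x ∈ Y with φ x e = v, w x}
  let Z : Finset X := {x ∈ Y | ∃ e ∈ S, φ x e ∈ H₀}
  have hheavy : #H₀ ≤ h * ∑ x ∈ Z, w x := by
    have := mul_card_le_of_heavy (H := H₀) hw (fun e he ↦ (ha e he).le)
      fun v hv ↦ (mem_filter.1 hv).2
    rw [div_mul_eq_mul_div, div_le_iff₀ hh₀, mul_assoc] at this
    exact (le_of_mul_le_mul_left this hC).trans_eq (mul_comm _ _)
  have hlight : ∀ x ∈ Y \ Z, 1 ≤ h * w x := by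
    intro x hx
    obtain ⟨hxY, hxZ⟩ := mem_sdiff.1 hx
    refine one_le_mul_of_light (hw x) (fun e he ↦ (ha e he).le) hy hy₁ (hcond x hxY) fun e he ↦ ?_
    by_contra! hlt
    exact hxZ (mem_filter.2 ⟨hxY, e, he, mem_filter.2 ⟨mem_univ _, e, he, hlt.le⟩⟩)
  refine ⟨H₀ ∪ (Y \ Z).image (φ · e₀), fun x hx ↦ ?_, ?_⟩
  · by_cases hxZ : x ∈ Z
    · obtain ⟨e, he, hxe⟩ := (mem_filter.1 hxZ).2
      exact ⟨e, he, mem_union_left _ hxe⟩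
    · exact ⟨e₀, he₀, mem_union_right _ (mem_image_of_mem _ (mem_sdiff.2 ⟨hx, hxZ⟩))⟩
  · have hcount : (#(Y \ Z) : ℝ) ≤ h * ∑ x ∈ Y \ Z, w x := by
      rw [mul_sum, ← nsmul_one, ← sum_const]
      exact sum_le_sum hlight
    have hunion : (#(H₀ ∪ (Y \ Z).image (φ · e₀)) : ℝ) ≤ #H₀ + #(Y \ Z) := by
      exact_mod_cast (card_union_le _ _).trans (Nat.add_le_add_left card_image_le _)
    rw [← sum_sdiff (filter_subset (fun x ↦ ∃ e ∈ S, φ x e ∈ H₀) Y), mul_add]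
    linarith

end Covers

section EdgeWeights

theorem exists_edge_forall_eq_of_not_disjoint {α β : Type*} {F : SimpleGraph α}
    {f g : α → β} {π : β → α}
    (hf : Function.LeftInverse π f) (hg : Function.LeftInverse π g)
    (hfg : ¬ Disjoint (edgeImage F f) (edgeImage F g)) :
    ∃ e ∈ F.edgeSet, ∀ x ∈ e, f x = g x := by
  obtain ⟨_, ⟨e, he, rfl⟩, e', -, hee'⟩ := Set.not_disjoint_iff.1 hfg
  refine ⟨e, he, fun x hx ↦ ?_⟩
  obtain ⟨x', -, hx'⟩ := Sym2.mem_map.1 (hee' ▸ Sym2.mem_map.2 ⟨x, hx, rfl⟩ : f x ∈ e'.map g)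
  rw [← hx', ← hg x', hx', hf]

variable {α β : Type*} [Fintype α] {F : SimpleGraph α} {G : SimpleGraph β}

/-- The edge weights `a` control the overlaps of copies of `F`: if two copies in a random placement
differ exactly on the roles in `R` and share an edge, which happens with relative probability
`|V(F)| ^ (-|R|)`, then some edge which they share has at least that squared weight. -/
def ControlsOverlaps (F : SimpleGraph α) (a : Sym2 α → ℝ) : Prop :=
  ∀ R : Finset α, R.Nonempty → (∃ e ∈ F.edgeSet, ∀ x ∈ e, x ∉ R) →
    ∃ e ∈ F.edgeSet, (∀ x ∈ e, x ∉ R) ∧ ((Fintype.card α : ℝ)⁻¹) ^ #R ≤ a e ^ 2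

open Classical in
theorem ControlsOverlaps.card_mul_le [Nonempty α] [Fintype β] {a : Sym2 α → ℝ}
    (ha : ControlsOverlaps F a) {f g : α → β} (hf : Function.Injective f)
    (hg : Function.Injective g) (hne : f ≠ g)
    (hfg : ¬ Disjoint (edgeImage F f) (edgeImage F g)) :
    (#{π : β → α | Function.LeftInverse π f ∧ Function.LeftInverse π g} : ℝ) *
        (Fintype.card α : ℝ) ^ Fintype.card α ≤
      (∑ e ∈ F.edgeFinset with e.map f = e.map g, a e ^ 2) *
        (Fintype.card α : ℝ) ^ Fintype.card β := by
  set k : ℝ := (Fintype.card α : ℝ)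
  have : 0 < k := Nat.cast_pos.2 Fintype.card_pos
  by_cases hπ : ∃ π : β → α, Function.LeftInverse π f ∧ Function.LeftInverse π g
  · obtain ⟨π, hπf, hπg⟩ := hπ
    obtain ⟨x, hx⟩ := Function.ne_iff.1 hne
    obtain ⟨e, he, hfge⟩ := exists_edge_forall_eq_of_not_disjoint hπf hπg hfg
    obtain ⟨e₁, he₁, hR, hae₁⟩ := ha {x | f x ≠ g x} ⟨x, by simpa using hx⟩
      ⟨e, he, fun x hx ↦ by simpa using hfge x hx⟩
    have hshared : a e₁ ^ 2 ≤ ∑ e ∈ F.edgeFinset with e.map f = e.map g, a e ^ 2 := by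
      refine single_le_sum (f := fun e ↦ a e ^ 2) (fun e _ ↦ sq_nonneg _) ?_
      exact mem_filter.2 ⟨SimpleGraph.mem_edgeFinset.2 he₁,
        Sym2.map_congr fun x hx ↦ by simpa using hR x hx⟩
    have hcount : (#{π : β → α | Function.LeftInverse π f ∧ Function.LeftInverse π g} : ℝ) *
        k ^ (Fintype.card α + #{x | f x ≠ g x}) ≤ k ^ Fintype.card β := by
      simp only [k]
      exact_mod_cast card_filter_leftInverse_and_mul_le hf hg
    refine le_trans ?_ (mul_le_mul_of_nonneg_right (hae₁.trans hshared) (by positivity))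
    rw [inv_pow, inv_mul_eq_div, le_div_iff₀ (by positivity), mul_assoc, ← pow_add]
    exact hcount
  · have hempty : ({π | Function.LeftInverse π f ∧ Function.LeftInverse π g} :
        Finset (β → α)) = ∅ :=
      filter_eq_empty_iff.2 fun π _ h ↦ hπ ⟨π, h⟩
    rw [hempty, card_empty, Nat.cast_zero, zero_mul]
    exact mul_nonneg (sum_nonneg fun e _ ↦ sq_nonneg _) (by positivity)

open Classical in
/-- The conflict kernel of the edge weights `a`: distinct copies of `F` conflict by the total
squared weight of the edges which they share in the same roles. -/
noncomputable def overlapKernel (F : SimpleGraph α) (a : Sym2 α → ℝ) (f g : α → β) : ℝ :=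
  if f = g then 1 else ∑ e ∈ F.edgeFinset with e.map f = e.map g, a e ^ 2

theorem overlapKernel_nonneg (a : Sym2 α → ℝ) (f g : α → β) : 0 ≤ overlapKernel F a f g := by
  unfold overlapKernel
  split_ifs
  exacts [zero_le_one, sum_nonneg fun e _ ↦ sq_nonneg _]

open Classical in
theorem sum_overlapKernel_mul {Y : Finset (α → β)} {f : α → β} (hf : f ∈ Y) (a : Sym2 α → ℝ)
    (w : (α → β) → ℝ) : ∑ g ∈ Y, overlapKernel F a f g * w g = w f +
      ∑ e ∈ F.edgeFinset, a e ^ 2 * (∑ g ∈ Y with e.map g = e.map f, w g - w f) := by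
  have hterm (g : α → β) : overlapKernel F a f g * w g = (if g = f then w f else 0) +
      ∑ e ∈ F.edgeFinset, a e ^ 2 *
        ((if e.map g = e.map f then w g else 0) - if g = f then w f else 0) := by
    unfold overlapKernel
    obtain rfl | hne := eq_or_ne g f
    · simp
    · simp [hne, hne.symm, sum_filter, sum_mul, eq_comm (a := Sym2.map f _)]
  simp only [hterm, sum_add_distrib, sum_ite_eq', hf, if_true]
  rw [sum_comm]
  simp only [← mul_sum, sum_sub_distrib, sum_ite_eq', hf, if_true, sum_filter]

open Classical in
theorem FarFromFree.exists_isPlacedPacking_of_controlsOverlaps [Fintype β] {ε : ℝ}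
    (h : FarFromFree F G ε) (hF : F.edgeSet.Nonempty) {a : Sym2 α → ℝ} (ha : ControlsOverlaps F a)
    (ha₀ : ∀ e ∈ F.edgeFinset, 0 < a e) {y : ℝ} (hy : y ≤ ∑ e ∈ F.edgeFinset, a e ^ 2)
    (hy₁ : y < 1) :
    ∃ π I, IsPlacedPacking F G π I ∧ ε * (Fintype.card β : ℝ) ^ 2 ≤
      (1 - y + (∑ e ∈ F.edgeFinset, a e) ^ 2) *
        ((Fintype.card α : ℝ) ^ Fintype.card α * #I) := by
  have : Nonempty α := let ⟨e, _⟩ := hF; ⟨e.out.1⟩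
  let Y : Finset (α → β) := {f | IsCopyMap F G f}
  have hY : ∀ f ∈ Y, IsCopyMap F G f := fun f hf ↦ (mem_filter.1 hf).2
  obtain ⟨w, hw, hge, heq⟩ := exists_equilibrium (K := overlapKernel F a)
    (fun f g ↦ by simp only [overlapKernel, eq_comm]) (overlapKernel_nonneg a)
    (fun f ↦ if_pos rfl) Y
  obtain ⟨π, I, hI, hcard⟩ := exists_isPlacedPacking_of_kernel hF hY hw (overlapKernel_nonneg a)
    fun f hf g hg hfg ↦ by
      by_cases hne : f = g
      · subst hne
        simp only [overlapKernel, if_true, and_self, one_mul]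
        exact_mod_cast (card_filter_leftInverse (hY f hf).1).le
      · simpa only [overlapKernel, hne, if_false] using
          ha.card_mul_le (hY f hf).1 (hY g hg).1 hne hfg
  obtain ⟨H, hH, hHcard⟩ := exists_cover (φ := fun f e ↦ Sym2.map f e)
    (SimpleGraph.edgeFinset_nonempty.2 (SimpleGraph.edgeSet_nonempty.1 hF)) hw ha₀ hy hy₁
    fun f hf ↦ (hge f hf).trans_eq (sum_overlapKernel_mul hf a w)
  rw [heq] at hcard
  refine ⟨π, I, hI, ?_⟩
  have hhit : ε * (Fintype.card β : ℝ) ^ 2 ≤ #H := by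
    rw [← Nat.card_eq_fintype_card]
    exact h.le_card fun f hf ↦ by
      simpa only [SimpleGraph.mem_edgeFinset] using hH f (mem_filter.2 ⟨mem_univ _, hf⟩)
  have hsq := sq_nonneg (∑ e ∈ F.edgeFinset, a e)
  exact (hhit.trans hHcard).trans (mul_le_mul_of_nonneg_left hcard (by linarith))

end EdgeWeights

section Levels

variable {α β : Type*} {F : SimpleGraph α} {G : SimpleGraph β} {t : ℕ}

open Classical in
/-- The edge weights which give an edge in `L i` weight at least `x ^ i`, and every edge weight at
least `x ^ t`. -/
noncomputable def levelWeight (x : ℝ) (L : Fin t → Finset (Sym2 α)) (e : Sym2 α) : ℝ :=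
  x ^ t + ∑ i, if e ∈ L i then x ^ (i : ℕ) - x ^ t else 0

/-- `L` is a level system of depth `t` for `F`: whenever a set `R` of fewer than `t` vertices misses
some edge of `F`, it misses an edge of `F` on level at most `|R|`. -/
def IsLevelSystem (F : SimpleGraph α) (L : Fin t → Finset (Sym2 α)) : Prop :=
  ∀ R : Finset α, R.Nonempty → #R < t → (∃ e ∈ F.edgeSet, ∀ x ∈ e, x ∉ R) →
    ∃ i : Fin t, i ≤ #R ∧ ∃ e ∈ L i, e ∈ F.edgeSet ∧ ∀ x ∈ e, x ∉ R

variable {x : ℝ} {L : Fin t → Finset (Sym2 α)}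

theorem pow_le_levelWeight (hx₀ : 0 ≤ x) (hx₁ : x ≤ 1) (e : Sym2 α) :
    x ^ t ≤ levelWeight x L e := by
  classical
  refine le_add_of_nonneg_right (sum_nonneg fun i _ ↦ ?_)
  split_ifs
  exacts [sub_nonneg.2 (pow_le_pow_of_le_one hx₀ hx₁ i.2.le), le_rfl]

theorem pow_le_levelWeight_of_mem (hx₀ : 0 ≤ x) (hx₁ : x ≤ 1) {e : Sym2 α} {i : Fin t}
    (he : e ∈ L i) : x ^ (i : ℕ) ≤ levelWeight x L e := by
  classical
  have hle : (if e ∈ L i then x ^ (i : ℕ) - x ^ t else 0) ≤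
      ∑ j : Fin t, if e ∈ L j then x ^ (j : ℕ) - x ^ t else 0 := by
    refine single_le_sum (f := fun j : Fin t ↦ if e ∈ L j then x ^ (j : ℕ) - x ^ t else 0)
      (fun j _ ↦ ?_) (mem_univ i)
    split_ifs
    exacts [sub_nonneg.2 (pow_le_pow_of_le_one hx₀ hx₁ j.2.le), le_rfl]
  rw [if_pos he] at hle
  unfold levelWeight
  linarith

theorem sum_levelWeight_le (hx₀ : 0 ≤ x) (hx₁ : x ≤ 1) {m : Fin t → ℕ} (hm : ∀ i, #(L i) ≤ m i)
    (S : Finset (Sym2 α)) :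
    ∑ e ∈ S, levelWeight x L e ≤ #S * x ^ t + ∑ i, m i * (x ^ (i : ℕ) - x ^ t) := by
  classical
  unfold levelWeight
  rw [sum_add_distrib, sum_const, nsmul_eq_mul, sum_comm]
  refine add_le_add_right (sum_le_sum fun i _ ↦ ?_) _
  rw [← sum_filter, sum_const, nsmul_eq_mul]
  refine mul_le_mul_of_nonneg_right ?_ (sub_nonneg.2 (pow_le_pow_of_le_one hx₀ hx₁ i.2.le))
  exact mod_cast (card_le_card fun e he ↦ (mem_filter.1 he).2).trans (hm i)

theorem IsLevelSystem.controlsOverlaps [Fintype α] (hL : IsLevelSystem F L) :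
    ControlsOverlaps F (levelWeight (√(Fintype.card α))⁻¹ L) := by
  intro R hR hmiss
  have : Nonempty α := ⟨hR.choose⟩
  have hx₀ : 0 ≤ (√(Fintype.card α))⁻¹ := by positivity
  have hx₁ : (√(Fintype.card α))⁻¹ ≤ 1 :=
    inv_le_one_of_one_le₀ (Real.one_le_sqrt.2 (mod_cast Fintype.card_pos))
  have hpow : ((Fintype.card α : ℝ)⁻¹) ^ #R = ((√(Fintype.card α))⁻¹ ^ #R) ^ 2 := by
    rw [pow_right_comm, inv_pow (√_) 2, Real.sq_sqrt (Nat.cast_nonneg _)]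
  rw [hpow]
  obtain hR' | hR' := lt_or_ge #R t
  · obtain ⟨i, hi, e, he, heF, heR⟩ := hL R hR hR' hmiss
    refine ⟨e, heF, heR, pow_le_pow_left₀ (by positivity) ?_ 2⟩
    exact (pow_le_pow_of_le_one hx₀ hx₁ hi).trans (pow_le_levelWeight_of_mem hx₀ hx₁ he)
  · obtain ⟨e, heF, heR⟩ := hmiss
    refine ⟨e, heF, heR, pow_le_pow_left₀ (by positivity) ?_ 2⟩
    exact (pow_le_pow_of_le_one hx₀ hx₁ hR').trans (pow_le_levelWeight hx₀ hx₁ e)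

open Classical in
theorem FarFromFree.hasUniformlyFarSubgraph_of_isLevelSystem [Fintype α] [Fintype β] {ε : ℝ}
    (h : FarFromFree F G ε) (hε : 0 ≤ ε) (hF : F.edgeSet.Nonempty) (hL : IsLevelSystem F L)
    {ν y z : ℝ} (hν₀ : 0 < ν) (hν : EdgeProductBound F ν) (hy₁ : y < 1)
    (hy : y ≤ ∑ e ∈ F.edgeFinset, levelWeight (√(Fintype.card α))⁻¹ L e ^ 2)
    (hz : ∑ e ∈ F.edgeFinset, levelWeight (√(Fintype.card α))⁻¹ L e ≤ z)
    (hrate : (1 / 4 + ν + 1 / (4 * Fintype.card β)) * (1 - y + z ^ 2) ≤ 1) :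
    HasUniformlyFarSubgraph F G (ε / (Fintype.card α : ℝ) ^ Fintype.card α) := by
  have : Nonempty α := let ⟨e, _⟩ := hF; ⟨e.out.1⟩
  have hx₀ : 0 < (√(Fintype.card α))⁻¹ :=
    inv_pos.2 (Real.sqrt_pos.2 (mod_cast Fintype.card_pos))
  have hx₁ : (√(Fintype.card α))⁻¹ ≤ 1 :=
    inv_le_one_of_one_le₀ (Real.one_le_sqrt.2 (mod_cast Fintype.card_pos))
  have hpos (e) : 0 < levelWeight (√(Fintype.card α))⁻¹ L e :=
    (pow_pos hx₀ t).trans_le (pow_le_levelWeight hx₀.le hx₁ e)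
  obtain ⟨π, I, hI, hcard⟩ := h.exists_isPlacedPacking_of_controlsOverlaps hF hL.controlsOverlaps
    (fun e _ ↦ hpos e) hy hy₁
  refine hI.hasUniformlyFarSubgraph_of_le_card hν₀ (by positivity) hν ?_
  have hk : (0 : ℝ) < (Fintype.card α : ℝ) ^ Fintype.card α := by positivity
  have hz₂ := pow_le_pow_left₀ (sum_nonneg fun e (_ : e ∈ F.edgeFinset) ↦ (hpos e).le) hz 2
  have hcover : ε * (Fintype.card β : ℝ) ^ 2 ≤
      (1 - y + z ^ 2) * ((Fintype.card α : ℝ) ^ Fintype.card α * #I) :=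
    hcard.trans (mul_le_mul_of_nonneg_right (by linarith) (by positivity))
  calc _ = (1 / 4 + ν + 1 / (4 * Fintype.card β)) * (ε * (Fintype.card β : ℝ) ^ 2) /
          (Fintype.card α : ℝ) ^ Fintype.card α := by ring
    _ ≤ (1 / 4 + ν + 1 / (4 * Fintype.card β)) * ((1 - y + z ^ 2) *
          ((Fintype.card α : ℝ) ^ Fintype.card α * #I)) /
          (Fintype.card α : ℝ) ^ Fintype.card α :=
        div_le_div_of_nonneg_right
          (mul_le_mul_of_nonneg_left hcover (by positivity)) hk.le
    _ = (1 / 4 + ν + 1 / (4 * Fintype.card β)) * (1 - y + z ^ 2) * #I := by field_simp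
    _ ≤ #I := mul_le_of_le_one_left (Nat.cast_nonneg _) hrate

end Levels

section Automorphisms

variable {α β : Type*} [Fintype α] [Fintype β] {F : SimpleGraph α} {G : SimpleGraph β} {ε : ℝ}

open Classical in
-- The edges of a maximal edge-disjoint family of copies meet all copies.
theorem FarFromFree.exists_pairwiseDisjoint_edgeImage (h : FarFromFree F G ε)
    (hF : F.edgeSet.Nonempty) :
    ∃ T : Finset (α → β), (∀ f ∈ T, IsCopyMap F G f) ∧
      (T : Set (α → β)).PairwiseDisjoint (edgeImage F) ∧
      ε * (Fintype.card β : ℝ) ^ 2 ≤ #T * #F.edgeFinset := by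
  obtain ⟨T, hT⟩ := (Set.toFinite {T : Finset (α → β) | (∀ f ∈ T, IsCopyMap F G f) ∧
    (T : Set (α → β)).PairwiseDisjoint (edgeImage F)}).exists_maximal ⟨∅, by simp⟩
  obtain ⟨hcopy, hdisj⟩ := hT.prop
  have hmeet (f : α → β) (hf : IsCopyMap F G f) :
      ∃ g ∈ T, ¬ Disjoint (edgeImage F f) (edgeImage F g) := by
    by_contra! hno
    have hfT : f ∈ T := hT.le_of_ge (y := insert f T)
      ⟨forall_mem_insert _ _ _ |>.2 ⟨hf, hcopy⟩, by
        rw [coe_insert]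
        exact hdisj.insert fun g hg _ ↦ hno g hg⟩ (subset_insert f T) (mem_insert_self f T)
    exact not_disjoint_edgeImage_self hF f (hno f hfT)
  refine ⟨T, hcopy, hdisj, ?_⟩
  have hcover := h.le_card (H := T.biUnion fun g ↦ F.edgeFinset.image (Sym2.map g))
    fun f hf ↦ by
      obtain ⟨g, hg, hfg⟩ := hmeet f hf
      obtain ⟨_, ⟨e, he, rfl⟩, e', he', hee'⟩ := Set.not_disjoint_iff.1 hfg
      exact ⟨e, he, mem_biUnion.2 ⟨g, hg,
        mem_image.2 ⟨e', SimpleGraph.mem_edgeFinset.2 he', hee'⟩⟩⟩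
  rw [Nat.card_eq_fintype_card] at hcover
  refine hcover.trans ?_
  exact_mod_cast card_biUnion_le_card_mul _ _ _ fun g _ ↦ card_image_le

theorem edgeImage_comp_iso {α β : Type*} {F : SimpleGraph α} (f : α → β) (σ : F ≃g F) :
    edgeImage F (f ∘ σ) = edgeImage F f := by
  ext e
  simp only [edgeImage, Set.mem_image]
  constructor
  · rintro ⟨e, he, rfl⟩
    exact ⟨e.map σ, (σ.toHom.mapEdgeSet ⟨e, he⟩).2, Sym2.map_map _⟩
  · rintro ⟨e, he, rfl⟩
    refine ⟨e.map σ.symm, (σ.symm.toHom.mapEdgeSet ⟨e, he⟩).2, ?_⟩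
    rw [Sym2.map_map]
    congr 1
    ext x
    simp

theorem IsCopyMap.comp_iso {α β : Type*} {F : SimpleGraph α} {G : SimpleGraph β} {f : α → β}
    (hf : IsCopyMap F G f) (σ : F ≃g F) : IsCopyMap F G (f ∘ σ) :=
  ⟨hf.1.comp σ.injective, fun _ _ hab ↦ hf.2 _ _ (σ.map_adj_iff.2 hab)⟩

theorem eq_of_leftInverse_comp_iso {α β : Type*} {F : SimpleGraph α} {f : α → β} {π : β → α}
    {σ τ : F ≃g F} (hσ : Function.LeftInverse π (f ∘ σ)) (hτ : Function.LeftInverse π (f ∘ τ)) :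
    σ = τ := by
  have hsymm {ρ : F ≃g F} (hρ : Function.LeftInverse π (f ∘ ρ)) : π ∘ f = ρ.symm :=
    funext fun x ↦ by simpa using hρ (ρ.symm x)
  exact congrArg RelIso.symm (DFunLike.coe_injective ((hsymm hσ).symm.trans (hsymm hτ)))

open Classical in
theorem exists_isPlacedPacking_of_forall_eq {β : Type*} [Finite β] {G : SimpleGraph β}
    (hF : F.edgeSet.Nonempty) {Y : Finset (α → β)}
    (hY : ∀ f ∈ Y, IsCopyMap F G f)
    (heq : ∀ f ∈ Y, ∀ g ∈ Y, ¬ Disjoint (edgeImage F f) (edgeImage F g) →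
      ∀ π : β → α, Function.LeftInverse π f → Function.LeftInverse π g → f = g) :
    ∃ π I, IsPlacedPacking F G π I ∧ #Y ≤ (Fintype.card α : ℝ) ^ Fintype.card α * #I := by
  cases nonempty_fintype β
  obtain ⟨π, I, hI, hcard⟩ := exists_isPlacedPacking_of_kernel (w := 1)
    (κ := fun f g ↦ if f = g then 1 else 0) hF hY (fun _ ↦ zero_le_one)
    (fun f g ↦ by split_ifs <;> norm_num) fun f hf g hg hfg ↦ by
      split_ifs with hne
      · subst hne
        simp only [and_self, one_mul]
        exact_mod_cast (card_filter_leftInverse (hY f hf).1).le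
      · have hempty : ({π | Function.LeftInverse π f ∧ Function.LeftInverse π g} :
            Finset (β → α)) = ∅ :=
          filter_eq_empty_iff.2 fun π _ hπ ↦ hne (heq f hf g hg hfg π hπ.1 hπ.2)
        simp [hempty]
  refine ⟨π, I, hI, hcard.trans' (le_of_eq ?_)⟩
  have hdiag : ∀ f ∈ Y, ∑ g ∈ Y, (if f = g then (1 : ℝ) else 0) = 1 :=
    fun f hf ↦ by rw [sum_ite_eq, if_pos hf]
  simp only [Pi.one_apply, mul_one, sum_congr rfl hdiag, sum_const, nsmul_eq_mul]
  ring

open Classical in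
-- Each copy in an edge-disjoint family can be labelled in `|Aut F|` ways, of which a colouring
-- places at most one.
theorem FarFromFree.exists_isPlacedPacking_of_automorphisms (h : FarFromFree F G ε)
    (hF : F.edgeSet.Nonempty) :
    ∃ π I, IsPlacedPacking F G π I ∧
      ε * (Fintype.card β : ℝ) ^ 2 * Nat.card (F ≃g F) ≤
        #F.edgeFinset * ((Fintype.card α : ℝ) ^ Fintype.card α * #I) := by
  obtain ⟨T, hcopy, hdisj, hT⟩ := h.exists_pairwiseDisjoint_edgeImage hF
  have : Finite (F ≃g F) := DFunLike.finite _
  have := Fintype.ofFinite (F ≃g F)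
  have hbase {f g : α → β} (hf : f ∈ T) (hg : g ∈ T) {σ τ : F ≃g F}
      (hfg : ¬ Disjoint (edgeImage F (f ∘ σ)) (edgeImage F (g ∘ τ))) : f = g := by
    rw [edgeImage_comp_iso, edgeImage_comp_iso] at hfg
    exact hdisj.elim hf hg hfg
  let Y : Finset (α → β) := (T ×ˢ univ).image fun p : (α → β) × (F ≃g F) ↦ p.1 ∘ p.2
  have hmemY {f : α → β} (hf : f ∈ Y) : ∃ g ∈ T, ∃ σ : F ≃g F, g ∘ σ = f := by
    simpa [Y] using hf
  have hYcard : #Y = #T * Nat.card (F ≃g F) := by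
    rw [card_image_of_injOn, card_product, card_univ, Nat.card_eq_fintype_card]
    rintro ⟨f, σ⟩ hf ⟨g, τ⟩ hg (hfg : f ∘ σ = g ∘ τ)
    have hfT : f ∈ T := (mem_product.1 hf).1
    obtain rfl : f = g := hbase (σ := σ) (τ := τ) hfT (mem_product.1 hg).1
      (hfg ▸ not_disjoint_edgeImage_self hF (f ∘ σ))
    exact congrArg _ (DFunLike.coe_injective ((hcopy f hfT).1.comp_left hfg))
  obtain ⟨π, I, hI, hYI⟩ := exists_isPlacedPacking_of_forall_eq (G := G) (Y := Y) hF
    (fun f hf ↦ by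
      obtain ⟨f, hfT, σ, rfl⟩ := hmemY hf
      exact (hcopy f hfT).comp_iso σ)
    (fun f hf g hg hfg π hπf hπg ↦ by
      obtain ⟨f, hfT, σ, rfl⟩ := hmemY hf
      obtain ⟨g, hgT, τ, rfl⟩ := hmemY hg
      obtain rfl := hbase hfT hgT hfg
      rw [eq_of_leftInverse_comp_iso hπf hπg])
  refine ⟨π, I, hI, ?_⟩
  rw [hYcard, Nat.cast_mul] at hYI
  calc _ ≤ #T * #F.edgeFinset * (Nat.card (F ≃g F) : ℝ) :=
        mul_le_mul_of_nonneg_right hT (Nat.cast_nonneg _)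
    _ = #F.edgeFinset * (#T * (Nat.card (F ≃g F) : ℝ)) := by ring
    _ ≤ _ := mul_le_mul_of_nonneg_left hYI (Nat.cast_nonneg _)

open Classical in
theorem FarFromFree.hasUniformlyFarSubgraph_of_automorphisms (h : FarFromFree F G ε) (hε : 0 ≤ ε)
    (hF : F.edgeSet.Nonempty) {ν : ℝ} (hν₀ : 0 < ν) (hν : EdgeProductBound F ν)
    (hrate : (1 / 4 + ν + 1 / (4 * Fintype.card β)) * #F.edgeFinset ≤ Nat.card (F ≃g F)) :
    HasUniformlyFarSubgraph F G (ε / (Fintype.card α : ℝ) ^ Fintype.card α) := by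
  have : Nonempty α := let ⟨e, _⟩ := hF; ⟨e.out.1⟩
  obtain ⟨π, I, hI, hcard⟩ := h.exists_isPlacedPacking_of_automorphisms hF
  refine hI.hasUniformlyFarSubgraph_of_le_card hν₀ (by positivity) hν ?_
  have he : (0 : ℝ) < #F.edgeFinset :=
    mod_cast card_pos.2 (SimpleGraph.edgeFinset_nonempty.2 (SimpleGraph.edgeSet_nonempty.1 hF))
  rw [div_mul_eq_mul_div, mul_div_assoc', div_le_iff₀ (by positivity)]
  refine le_of_mul_le_mul_left ?_ he
  calc _ = ε * (Fintype.card β : ℝ) ^ 2 *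
          ((1 / 4 + ν + 1 / (4 * Fintype.card β)) * #F.edgeFinset) := by ring
    _ ≤ ε * (Fintype.card β : ℝ) ^ 2 * Nat.card (F ≃g F) :=
        mul_le_mul_of_nonneg_left hrate (by positivity)
    _ ≤ _ := hcard.trans_eq (by ring)

/-- Two vertices are twins if they have the same neighbours apart from each other. -/
def AreTwins {α : Type*} (F : SimpleGraph α) (u v : α) : Prop :=
  ∀ x, x ≠ u → x ≠ v → (F.Adj u x ↔ F.Adj v x)

/-- The automorphism which exchanges two twins. -/
def AreTwins.swap {α : Type*} [DecidableEq α] {F : SimpleGraph α} {u v : α}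
    (h : AreTwins F u v) : F ≃g F where
  toEquiv := Equiv.swap u v
  map_rel_iff' {p q} := by
    have hmap : ∀ p q, F.Adj p q → F.Adj (Equiv.swap u v p) (Equiv.swap u v q) := by
      intro p q hpq
      have := h p
      have := h q
      simp only [Equiv.swap_apply_def]
      split_ifs <;> grind [F.adj_comm, F.irrefl]
    exact ⟨fun hpq ↦ by simpa using hmap _ _ hpq, hmap p q⟩

end Automorphisms

section EdgeProducts

variable {α : Type*} [Fintype α] {F : SimpleGraph α}

theorem sum_map_le_sum_univ_of_nodup {l : List α} (hl : l.Nodup) {w : α → ℝ}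
    (hw : ∀ a, 0 ≤ w a) : (l.map w).sum ≤ ∑ a, w a := by
  classical
  rw [← List.sum_toFinset w hl]
  exact sum_le_univ_sum_of_nonneg hw

theorem two_mul_sqrt_le_add {x y q : ℝ} (hx : 0 ≤ x) (hy : 0 ≤ y) (h : q ≤ x * y) :
    2 * √q ≤ x + y := by
  have hq : √q ≤ √x * √y := Real.sqrt_mul hx y ▸ Real.sqrt_le_sqrt h
  have := two_mul_le_add_sq √x √y
  rw [Real.sq_sqrt hx, Real.sq_sqrt hy] at this
  linarith

theorem le_mul_sq_of_mul_sqrt_le {c q s : ℝ} (hc : 0 < c) (h : c * √q ≤ s) :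
    q ≤ (c ^ 2)⁻¹ * s ^ 2 := by
  rw [inv_mul_eq_div, le_div_iff₀' (by positivity)]
  have hsq := pow_le_pow_left₀ (by positivity) h 2
  rw [mul_pow, Real.sq_sqrt'] at hsq
  exact (mul_le_mul_of_nonneg_left (le_max_left q 0) (by positivity)).trans hsq

theorem edgeProductBound_of_matching {M : List (α × α)} (hM : M ≠ [])
    (hadj : ∀ p ∈ M, F.Adj p.1 p.2) (hnodup : (M.flatMap fun p ↦ [p.1, p.2]).Nodup) :
    EdgeProductBound F ((2 * M.length : ℝ) ^ 2)⁻¹ := by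
  intro w q hw hq
  refine le_mul_sq_of_mul_sqrt_le ?_ ?_
  · have := List.length_pos_iff.2 hM
    positivity
  refine le_trans ?_ (sum_map_le_sum_univ_of_nodup hnodup hw)
  clear hM hnodup
  induction M with
  | nil => simp
  | cons p M ih =>
    have hp := two_mul_sqrt_le_add (hw p.1) (hw p.2) (hq _ _ (hadj p List.mem_cons_self))
    have := ih fun p hp ↦ hadj p (List.mem_cons_of_mem _ hp)
    simp only [List.length_cons, Nat.cast_add, Nat.cast_one, List.flatMap_cons, List.map_append,
      List.sum_append, List.map_cons, List.map_nil, List.sum_cons, List.sum_nil]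
    linarith

theorem edgeProductBound_of_path {a b c d x : α} (hab : F.Adj a b) (hax : F.Adj a x)
    (hcd : F.Adj c d) (hnodup : [a, b, c, d, x].Nodup) : EdgeProductBound F (1 / 23) := by
  intro w q hw hq
  have hsum := sum_map_le_sum_univ_of_nodup hnodup hw
  simp only [List.map_cons, List.map_nil, List.sum_cons, List.sum_nil] at hsum
  have hcd := two_mul_sqrt_le_add (hw c) (hw d) (hq c d hcd)
  have hpath : 2 * √(2 * q) ≤ w a + (w b + w x) :=
    two_mul_sqrt_le_add (hw a) (add_nonneg (hw b) (hw x)) (by linarith [hq a b hab, hq a x hax])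
  rw [Real.sqrt_mul zero_le_two] at hpath
  have hs := le_mul_sq_of_mul_sqrt_le (c := 2 + 2 * √2) (q := q) (s := ∑ a, w a) (by positivity)
    (by linarith)
  refine hs.trans (mul_le_mul_of_nonneg_right ?_ (sq_nonneg _))
  rw [← one_div]
  refine one_div_le_one_div_of_le (by norm_num) ?_
  have : 1.4 ≤ √2 := Real.le_sqrt_of_sq_le (by norm_num)
  nlinarith [Real.sq_sqrt (zero_le_two (α := ℝ))]

end EdgeProducts

section Twins

variable {α : Type*} {F : SimpleGraph α} {u v u' v' : α}

theorem two_le_card_automorphisms [Finite α] (huv : u ≠ v) (h : AreTwins F u v) :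
    2 ≤ Nat.card (F ≃g F) := by
  classical
  have : Finite (F ≃g F) := DFunLike.finite _
  have : Nontrivial (F ≃g F) := ⟨h.swap, .refl, fun heq ↦ huv.symm <| by
    simpa [AreTwins.swap] using DFunLike.congr_fun heq u⟩
  exact Finite.one_lt_card

theorem three_le_card_automorphisms [Finite α] (huv : u ≠ v) (h : AreTwins F u v)
    (huv' : u' ≠ v') (h' : AreTwins F u' v') (hne : s(u, v) ≠ s(u', v')) :
    3 ≤ Nat.card (F ≃g F) := by
  classical
  have : Finite (F ≃g F) := DFunLike.finite _
  have hrefl {u v : α} (huv : u ≠ v) (h : AreTwins F u v) : h.swap ≠ .refl := fun heq ↦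
    huv.symm <| by simpa [AreTwins.swap] using DFunLike.congr_fun heq u
  have hswap : h.swap ≠ h'.swap := fun heq ↦ by
    have hu : Equiv.swap u v u = Equiv.swap u' v' u := DFunLike.congr_fun heq u
    grind [Sym2.eq_iff]
  have hinj : Function.Injective ![.refl, h.swap, h'.swap] := by
    intro i j
    fin_cases i <;> fin_cases j <;> simp [hrefl huv h, hrefl huv' h', hswap,
      (hrefl huv h).symm, (hrefl huv' h').symm, hswap.symm]
  simpa using Nat.card_le_card_of_injective _ hinj

open Classical in
theorem card_edgeFinset_le_card_automorphisms_of_star [Fintype α] {a : α}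
    (hstar : ∀ e ∈ F.edgeSet, a ∈ e) : #F.edgeFinset ≤ Nat.card (F ≃g F) := by
  have : Finite (F ≃g F) := DFunLike.finite _
  obtain hE | ⟨e, he⟩ := F.edgeFinset.eq_empty_or_nonempty
  · simp [hE]
  rw [SimpleGraph.mem_edgeFinset] at he
  obtain ⟨b, rfl⟩ := hstar e he
  have hleaf {v x : α} (hav : F.Adj a v) : F.Adj v x ↔ x = a := by
    refine ⟨fun hvx ↦ ?_, fun hxa ↦ hxa ▸ hav.symm⟩
    exact ((Sym2.mem_iff.1 (hstar s(v, x) hvx)).resolve_left hav.ne).symm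
  have htwins (v : F.neighborSet a) : AreTwins F b v := fun x _ _ ↦ by rw [hleaf he, hleaf v.2]
  calc #F.edgeFinset ≤ #(F.incidenceFinset a) := card_le_card fun e he ↦ by
        rw [SimpleGraph.mem_edgeFinset] at he
        exact (F.mem_incidenceFinset a e).2 ⟨he, hstar e he⟩
    _ = Nat.card (F.neighborSet a) := by
        rw [Nat.card_eq_fintype_card, F.card_incidenceFinset_eq_degree,
          F.card_neighborSet_eq_degree]
    _ ≤ Nat.card (F ≃g F) := Nat.card_le_card_of_injective (fun v ↦ (htwins v).swap)
      fun v w hvw ↦ Subtype.ext <| by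
        simpa [AreTwins.swap] using DFunLike.congr_fun hvw b

variable [Fintype α]

open Classical in
/-- The pairs of vertices in `S` which `F` does not join. -/
noncomputable def missingPairs (F : SimpleGraph α) (S : Finset α) : Finset (Sym2 α) :=
  S.offDiag.image (fun p ↦ s(p.1, p.2)) \ F.edgeFinset

theorem mem_missingPairs {S : Finset α} :
    s(u, v) ∈ missingPairs F S ↔ u ∈ S ∧ v ∈ S ∧ u ≠ v ∧ ¬ F.Adj u v := by
  simp only [missingPairs, mem_sdiff, mem_image, mem_offDiag, Prod.exists, Sym2.eq_iff,
    SimpleGraph.mem_edgeFinset, SimpleGraph.mem_edgeSet]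
  grind

open Classical in
theorem card_missingPairs_add {S : Finset α} (hS : ∀ e ∈ F.edgeSet, ∀ x ∈ e, x ∈ S) :
    #(missingPairs F S) + #F.edgeFinset = (#S).choose 2 := by
  rw [← Sym2.card_image_offDiag]
  refine card_sdiff_add_card_eq_card fun e he ↦ ?_
  induction e with
  | h u v =>
    rw [SimpleGraph.mem_edgeFinset] at he
    exact mem_image_of_mem (fun p : α × α ↦ s(p.1, p.2)) <| mem_offDiag.2
      ⟨hS _ he u (Sym2.mem_mk_left u v), hS _ he v (Sym2.mem_mk_right u v), he.ne⟩

theorem areTwins_of_missingPairs {S : Finset α} (hS : ∀ e ∈ F.edgeSet, ∀ x ∈ e, x ∈ S)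
    (hu : u ∈ S) (hv : v ∈ S) (h : ∀ x, x ≠ u → x ≠ v →
      (s(u, x) ∈ missingPairs F S ↔ s(v, x) ∈ missingPairs F S)) : AreTwins F u v := by
  intro x hxu hxv
  have hux (h : F.Adj u x) : x ∈ S := hS s(u, x) h x (Sym2.mem_mk_right u x)
  have hvx (h : F.Adj v x) : x ∈ S := hS s(v, x) h x (Sym2.mem_mk_right v x)
  have := h x hxu hxv
  simp only [mem_missingPairs] at this
  grind

open Classical in
theorem missingPairs_eq_of_card_le_two {S : Finset α} (h : #(missingPairs F S) ≤ 2) :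
    missingPairs F S = ∅ ∨ (∃ p q, p ≠ q ∧ missingPairs F S = {s(p, q)}) ∨
      (∃ p q r t, [p, q, r, t].Nodup ∧ missingPairs F S = {s(p, q), s(r, t)}) ∨
      ∃ p q r, [p, q, r].Nodup ∧ missingPairs F S = {s(p, q), s(p, r)} := by
  have hne {u v : α} (huv : s(u, v) ∈ missingPairs F S) : u ≠ v := (mem_missingPairs.1 huv).2.2.1
  obtain h | h | h : #(missingPairs F S) = 0 ∨ #(missingPairs F S) = 1 ∨
    #(missingPairs F S) = 2 := by lia
  · exact .inl (card_eq_zero.1 h)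
  · obtain ⟨⟨p, q⟩, hN⟩ := card_eq_one.1 h
    exact .inr (.inl ⟨p, q, hne (hN ▸ mem_singleton_self _), hN⟩)
  · obtain ⟨⟨p, q⟩, ⟨r, t⟩, hpqrt, hN⟩ := card_eq_two.1 h
    change s(p, q) ≠ s(r, t) at hpqrt
    change missingPairs F S = {s(p, q), s(r, t)} at hN
    have hpq : p ≠ q := hne (by simp [hN])
    have hrt : r ≠ t := hne (by simp [hN])
    right; right
    by_cases hdisj : [p, q, r, t].Nodup
    · exact .inl ⟨p, q, r, t, hdisj, hN⟩
    · right
      obtain rfl | rfl | rfl | rfl : p = r ∨ p = t ∨ q = r ∨ q = t := by grind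
      · exact ⟨p, q, t, by grind, hN⟩
      · exact ⟨p, q, r, by grind [Sym2.eq_swap], hN.trans (by rw [Sym2.eq_swap (a := r)])⟩
      · exact ⟨q, p, t, by grind [Sym2.eq_swap], hN.trans (by rw [Sym2.eq_swap (a := p)])⟩
      · exact ⟨q, p, r, by grind [Sym2.eq_swap],
          hN.trans (by rw [Sym2.eq_swap (a := p), Sym2.eq_swap (a := r)])⟩

theorem exists_areTwins_of_missingPairs {S : Finset α} (hS : ∀ e ∈ F.edgeSet, ∀ x ∈ e, x ∈ S)
    (hcard : 2 ≤ #S) (hmissing : #(missingPairs F S) ≤ 2) : ∃ u v, u ≠ v ∧ AreTwins F u v := by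
  have htwins {u v : α} := areTwins_of_missingPairs hS (u := u) (v := v)
  have hmem {p q : α} := (mem_missingPairs (F := F) (S := S) (u := p) (v := q)).1
  obtain h | ⟨p, q, hpq, h⟩ | ⟨p, q, r, t, hne, h⟩ | ⟨p, q, r, hne, h⟩ :=
    missingPairs_eq_of_card_le_two hmissing
  · obtain ⟨u, hu, v, hv, huv⟩ := one_lt_card.1 hcard
    exact ⟨u, v, huv, htwins hu hv (by simp [h])⟩
  · have hmem' := @hmem p q (by simp [h])
    refine ⟨p, q, hpq, htwins hmem'.1 hmem'.2.1 ?_⟩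
    simp only [h, mem_singleton]
    grind [Sym2.eq_iff]
  · have hmem' := @hmem p q (by simp [h])
    refine ⟨p, q, by grind, htwins hmem'.1 hmem'.2.1 ?_⟩
    simp only [h, mem_insert, mem_singleton]
    grind [Sym2.eq_iff]
  · have hq := @hmem p q (by simp [h])
    have hr := @hmem p r (by simp [h])
    refine ⟨q, r, by grind, htwins hq.2.1 hr.2.1 ?_⟩
    simp only [h, mem_insert, mem_singleton]
    grind [Sym2.eq_iff]

open Classical in
theorem exists_two_areTwins_of_missingPairs {S : Finset α}
    (hS : ∀ e ∈ F.edgeSet, ∀ x ∈ e, x ∈ S) (hcard : 5 ≤ #S) (hmissing : #(missingPairs F S) ≤ 2) :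
    ∃ u v u' v', u ≠ v ∧ AreTwins F u v ∧ u' ≠ v' ∧ AreTwins F u' v' ∧ s(u, v) ≠ s(u', v') := by
  have htwins {u v : α} := areTwins_of_missingPairs hS (u := u) (v := v)
  have hmem {p q : α} := (mem_missingPairs (F := F) (S := S) (u := p) (v := q)).1
  have hfree (A : Finset α) (hA : #A ≤ 3) (hN : ∀ e ∈ missingPairs F S, ∀ x ∈ e, x ∈ A) :
      ∃ u ∉ A, ∃ v ∉ A, u ≠ v ∧ AreTwins F u v := by
    obtain ⟨u, hu, v, hv, huv⟩ := one_lt_card.1 (show 1 < #(S \ A) by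
      have := le_card_sdiff A S
      lia)
    rw [mem_sdiff] at hu hv
    exact ⟨u, hu.2, v, hv.2, huv, htwins hu.1 hv.1 fun x _ _ ↦ iff_of_false
      (fun h ↦ hu.2 (hN _ h u (Sym2.mem_mk_left u x)))
      fun h ↦ hv.2 (hN _ h v (Sym2.mem_mk_left v x))⟩
  obtain h | ⟨p, q, hpq, h⟩ | ⟨p, q, r, t, hne, h⟩ | ⟨p, q, r, hne, h⟩ :=
    missingPairs_eq_of_card_le_two hmissing
  · obtain ⟨u, -, v, -, huv, hT⟩ := hfree ∅ (by simp) (by simp [h])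
    obtain ⟨u', hu', v', hv', huv', hT'⟩ := hfree {u} (by simp) (by simp [h])
    exact ⟨u, v, u', v', huv, hT, huv', hT', by grind [Sym2.eq_iff]⟩
  · have hmem' := @hmem p q (by simp [h])
    obtain ⟨u, hu, v, -, huv, hT⟩ := hfree {p, q} (card_le_two.trans (by simp)) (by simp [h])
    refine ⟨p, q, u, v, hpq, htwins hmem'.1 hmem'.2.1 ?_, huv, hT, by grind [Sym2.eq_iff]⟩
    simp only [h, mem_singleton]
    grind [Sym2.eq_iff]
  · have hpq := @hmem p q (by simp [h])
    have hrt := @hmem r t (by simp [h])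
    refine ⟨p, q, r, t, by grind, htwins hpq.1 hpq.2.1 ?_, by grind, htwins hrt.1 hrt.2.1 ?_,
      by grind [Sym2.eq_iff]⟩ <;>
    · simp only [h, mem_insert, mem_singleton]
      grind [Sym2.eq_iff]
  · have hq := @hmem p q (by simp [h])
    have hr := @hmem p r (by simp [h])
    obtain ⟨u, hu, v, -, huv, hT⟩ := hfree {p, q, r} card_le_three (by simp [h])
    refine ⟨q, r, u, v, by grind, htwins hq.2.1 hr.2.1 ?_, huv, hT, by grind [Sym2.eq_iff]⟩
    simp only [h, mem_insert, mem_singleton]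
    grind [Sym2.eq_iff]

end Twins

section SmallGraphs

variable {α β : Type*} [Fintype α] [Fintype β] {F : SimpleGraph α} {G : SimpleGraph β}

open Classical in
theorem IsCopyMap.hasUniformlyFarSubgraph [Nonempty α] {f : α → β} (hf : IsCopyMap F G f) {γ : ℝ}
    (hdeg : γ / 2 * Fintype.card α ≤ 1)
    (hcard : γ * (Fintype.card β : ℝ) ^ 2 ≤ (Fintype.card α : ℝ) ^ 2) :
    HasUniformlyFarSubgraph F G γ := by
  have hI : IsPlacedPacking F G (Function.invFun f) {f} :=
    { isCopyMap := by simpa using hf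
      leftInverse := by simpa using Function.leftInverse_invFun hf.1
      pairwiseDisjoint := by simp }
  have hU : #(univ.image f) = Fintype.card α := card_image_of_injective _ hf.1
  refine hI.hasUniformlyFarSubgraph (U := univ.image f) (by simp) (fun v hv ↦ ?_) ?_
  · have hv : v ∈ Set.range f := by simpa using hv
    rw [hU, filter_singleton, if_pos hv, card_singleton]
    exact_mod_cast hdeg
  · rwa [hU, Nat.card_eq_fintype_card]

theorem FarFromFree.le_one {α β : Type*} [Finite β] [Nonempty β] {F : SimpleGraph α}
    {G : SimpleGraph β} {ε : ℝ} (h : FarFromFree F G ε) (hF : F.edgeSet.Nonempty) : ε ≤ 1 := by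
  classical
  have := Fintype.ofFinite β
  have hcover := h.le_card (H := G.edgeFinset) fun f hf ↦ by
    obtain ⟨⟨a, b⟩, hab⟩ := hF
    exact ⟨s(a, b), hab, SimpleGraph.mem_edgeFinset.2 (hf.2 a b hab)⟩
  rw [Nat.card_eq_fintype_card] at hcover
  have hedges : #G.edgeFinset ≤ Fintype.card β ^ 2 :=
    SimpleGraph.card_edgeFinset_le_card_choose_two.trans (Nat.choose_le_pow _ _)
  have hn : (0 : ℝ) < Fintype.card β ^ 2 := pow_pos (Nat.cast_pos.2 Fintype.card_pos) 2
  exact le_of_mul_le_mul_right (hcover.trans (by rw [one_mul]; exact_mod_cast hedges)) hn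

theorem FarFromFree.hasUniformlyFarSubgraph_of_sq_le {ε : ℝ} (h : FarFromFree F G ε) (hε : 0 < ε)
    (hF : F.edgeSet.Nonempty) (hn : Fintype.card β ^ 2 ≤ Fintype.card α ^ (Fintype.card α + 2)) :
    HasUniformlyFarSubgraph F G (ε / (Fintype.card α : ℝ) ^ Fintype.card α) := by
  have : Nonempty α := let ⟨e, _⟩ := hF; ⟨e.out.1⟩
  obtain _ | _ := isEmpty_or_nonempty β
  · have hI : IsPlacedPacking F G (fun _ ↦ Classical.arbitrary α) ∅ := ⟨by simp, by simp, by simp⟩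
    exact hI.hasUniformlyFarSubgraph (U := ∅) (by simp) (by simp) (by simp)
  have hε₁ := h.le_one hF
  have hk : (0 : ℝ) < Fintype.card α := Nat.cast_pos.2 Fintype.card_pos
  obtain ⟨f, hf⟩ := h G le_rfl (by simpa using by positivity)
  refine IsCopyMap.hasUniformlyFarSubgraph (f := f) ⟨hf, fun _ _ ↦ f.map_adj⟩ ?_ ?_
  · have hself : (Fintype.card α : ℝ) ≤ (Fintype.card α : ℝ) ^ Fintype.card α := mod_cast
      Nat.le_self_pow Fintype.card_ne_zero _
    rw [div_div, div_mul_eq_mul_div, div_le_one (by positivity)]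
    nlinarith
  · rw [div_mul_eq_mul_div, div_le_iff₀ (by positivity), ← pow_add, add_comm 2]
    calc _ ≤ 1 * (Fintype.card β : ℝ) ^ 2 := by gcongr
      _ ≤ _ := by rw [one_mul]; exact_mod_cast hn

theorem lt_of_sq_le_pow_add_two {m k n N : ℕ} (hm : 0 < m) (hmk : m ≤ k)
    (hN : N ^ 2 ≤ m ^ (m + 2)) (hn : k ^ (k + 2) < n ^ 2) : N < n :=
  lt_of_pow_lt_pow_left₀ 2 n.zero_le <| calc
    N ^ 2 ≤ m ^ (k + 2) := hN.trans (Nat.pow_le_pow_right hm (by lia))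
    _ ≤ k ^ (k + 2) := Nat.pow_le_pow_left hmk _
    _ < n ^ 2 := hn

end SmallGraphs

section FewDisjointEdges

variable {α β : Type*} [Fintype α] [Fintype β] {F : SimpleGraph α} {G : SimpleGraph β} {ε : ℝ}

theorem FarFromFree.hasUniformlyFarSubgraph_of_star {β : Type*} [Finite β]
    {G : SimpleGraph β} (h : FarFromFree F G ε) (hε : 0 ≤ ε) {a b : α} (hab : F.Adj a b)
    (hstar : ∀ e ∈ F.edgeSet, a ∈ e) :
    HasUniformlyFarSubgraph F G (ε / (Fintype.card α : ℝ) ^ Fintype.card α) := by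
  classical
  have := Fintype.ofFinite β
  have hν := edgeProductBound_of_matching (F := F) (M := [(a, b)]) (by simp) (by simpa)
    (by simpa using hab.ne)
  refine h.hasUniformlyFarSubgraph_of_automorphisms hε ⟨s(a, b), hab⟩ (by norm_num) hν ?_
  have haut : (#F.edgeFinset : ℝ) ≤ Nat.card (F ≃g F) :=
    mod_cast card_edgeFinset_le_card_automorphisms_of_star hstar
  have hn : 1 / (4 * (Fintype.card β : ℝ)) ≤ 1 / 4 := by
    have := Nat.cast_inv_le_one (α := ℝ) (Fintype.card β)
    rw [one_div, mul_inv]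
    linarith
  refine (mul_le_of_le_one_left (Nat.cast_nonneg _) ?_).trans haut
  norm_num at hn ⊢
  linarith

theorem FarFromFree.hasUniformlyFarSubgraph_of_card_eq_three (h : FarFromFree F G ε) (hε : 0 ≤ ε)
    (hF : F.edgeSet.Nonempty) (hn : 2 ≤ Fintype.card β) {S : Finset α} (hcard : #S = 3)
    (hS : ∀ e ∈ F.edgeSet, ∀ x ∈ e, x ∈ S) :
    HasUniformlyFarSubgraph F G (ε / (Fintype.card α : ℝ) ^ Fintype.card α) := by
  classical
  obtain ⟨⟨a, b⟩, hab⟩ := id hF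
  have hν := edgeProductBound_of_matching (F := F) (M := [(a, b)]) (by simp) (by simpa)
    (by simpa using hab.ne)
  refine h.hasUniformlyFarSubgraph_of_automorphisms hε hF (by norm_num) hν ?_
  have hmissing := card_missingPairs_add hS
  rw [hcard, show Nat.choose 3 2 = 3 from rfl] at hmissing
  have he₀ : 0 < #F.edgeFinset := card_pos.2 ⟨s(a, b), SimpleGraph.mem_edgeFinset.2 hab⟩
  obtain ⟨u, v, huv, hT⟩ := exists_areTwins_of_missingPairs hS (by lia) (by lia)
  have haut : (2 : ℝ) ≤ Nat.card (F ≃g F) := mod_cast two_le_card_automorphisms huv hT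
  have he : (#F.edgeFinset : ℝ) ≤ 3 := mod_cast by lia
  have hn : 1 / (4 * (Fintype.card β : ℝ)) ≤ 1 / (4 * 2) := by
    gcongr
    exact_mod_cast hn
  calc _ ≤ (1 / 4 + 1 / 4 + 1 / (4 * 2)) * (3 : ℝ) := by
        gcongr
        norm_num
    _ ≤ _ := haut.trans' (by norm_num)

theorem FarFromFree.hasUniformlyFarSubgraph_of_card_eq_four (h : FarFromFree F G ε) (hε : 0 ≤ ε)
    (hn : 64 ≤ Fintype.card β) {a b c d : α} (hab : F.Adj a b) (hcd : F.Adj c d)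
    (hnodup : [a, b, c, d].Nodup) (hS : ∀ e ∈ F.edgeSet, ∀ x ∈ e, x ∈ [a, b, c, d]) :
    HasUniformlyFarSubgraph F G (ε / (Fintype.card α : ℝ) ^ Fintype.card α) := by
  classical
  have hν := edgeProductBound_of_matching (F := F) (M := [(a, b), (c, d)]) (by simp)
    (by simp [hab, hcd]) hnodup
  refine h.hasUniformlyFarSubgraph_of_automorphisms hε ⟨s(a, b), hab⟩ (by norm_num) hν ?_
  have hn : 1 / (4 * (Fintype.card β : ℝ)) ≤ 1 / (4 * 64) := by
    gcongr
    exact_mod_cast hn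
  have hrate : 1 / 4 + ((2 * [(a, b), (c, d)].length : ℝ) ^ 2)⁻¹ + 1 / (4 * Fintype.card β) ≤
      1 / 3 := by
    norm_num at hn ⊢
    linarith
  refine (mul_le_mul_of_nonneg_right hrate (Nat.cast_nonneg _)).trans ?_
  have hS' : ∀ e ∈ F.edgeSet, ∀ x ∈ e, x ∈ [a, b, c, d].toFinset := by simpa using hS
  have hmissing := card_missingPairs_add hS'
  rw [List.toFinset_card_of_nodup hnodup] at hmissing
  change _ = 6 at hmissing
  have : Finite (F ≃g F) := DFunLike.finite _
  have haut : 1 ≤ Nat.card (F ≃g F) := Nat.card_pos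
  suffices #F.edgeFinset ≤ 3 * Nat.card (F ≃g F) by
    have : (#F.edgeFinset : ℝ) ≤ 3 * Nat.card (F ≃g F) := mod_cast this
    linarith
  obtain hfew | hmany := le_or_gt #F.edgeFinset 3
  · lia
  · obtain ⟨u, v, huv, hT⟩ := exists_areTwins_of_missingPairs hS'
      (by rw [List.toFinset_card_of_nodup hnodup]; simp) (by lia)
    have := two_le_card_automorphisms huv hT
    lia

end FewDisjointEdges

section LevelSystems

variable {α : Type*} {F : SimpleGraph α}

theorem forall_mem_mk_notMem {u v : α} {R : Finset α} :
    (∀ z ∈ s(u, v), z ∉ R) ↔ u ∉ R ∧ v ∉ R := Sym2.ball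

theorem exists_avoiding_edges (F : SimpleGraph α) (𝒯 : Finset (Finset α)) :
    ∃ T : Finset (Sym2 α), #T ≤ #𝒯 ∧ ∀ R ∈ 𝒯, (∃ e ∈ F.edgeSet, ∀ x ∈ e, x ∉ R) →
      ∃ e ∈ T, e ∈ F.edgeSet ∧ ∀ x ∈ e, x ∉ R := by
  classical
  obtain _ | _ := isEmpty_or_nonempty (Sym2 α)
  · exact ⟨∅, by simp, fun R _ ⟨e, _⟩ ↦ isEmptyElim e⟩
  choose! g hgF hg using fun (R : Finset α) (h : ∃ e ∈ F.edgeSet, ∀ x ∈ e, x ∉ R) ↦ h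
  exact ⟨𝒯.image g, card_image_le, fun R hR h ↦
    ⟨g R, mem_image_of_mem g hR, hgF R h, hg R h⟩⟩

open Classical in
theorem exists_isLevelSystem_of_three_disjoint_edges {a b c d x y : α} (hab : F.Adj a b)
    (hcd : F.Adj c d) (hxy : F.Adj x y) (hnodup : [a, b, c, d, x, y].Nodup) :
    ∃ T : Finset (Sym2 α), #T ≤ 8 ∧
      IsLevelSystem F ![∅, {s(a, b), s(c, d)}, {s(x, y)}, T] := by
  obtain ⟨T, hTcard, hT⟩ := exists_avoiding_edges F <|
    (({a, b} : Finset α) ×ˢ ({c, d} : Finset α) ×ˢ ({x, y} : Finset α)).image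
      fun p ↦ {p.1, p.2.1, p.2.2}
  refine ⟨T, hTcard.trans (card_image_le.trans ?_), fun R hR hRcard hmiss ↦ ?_⟩
  · rw [card_product, card_product]
    exact Nat.mul_le_mul card_le_two (Nat.mul_le_mul card_le_two card_le_two)
  by_cases habR : a ∉ R ∧ b ∉ R
  · exact ⟨1, hR.card_pos, s(a, b), by simp, hab, forall_mem_mk_notMem.2 habR⟩
  by_cases hcdR : c ∉ R ∧ d ∉ R
  · exact ⟨1, hR.card_pos, s(c, d), by simp, hcd, forall_mem_mk_notMem.2 hcdR⟩
  obtain ⟨p, hp, hpR⟩ : ∃ p ∈ ({a, b} : Finset α), p ∈ R := by grind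
  obtain ⟨q, hq, hqR⟩ : ∃ q ∈ ({c, d} : Finset α), q ∈ R := by grind
  have hpq : p ≠ q := by grind
  have hpqR : {p, q} ⊆ R := by grind
  by_cases hxyR : x ∉ R ∧ y ∉ R
  · refine ⟨2, ?_, s(x, y), by simp, hxy, forall_mem_mk_notMem.2 hxyR⟩
    exact (card_pair hpq).ge.trans (card_le_card hpqR)
  obtain ⟨r, hr, hrR⟩ : ∃ r ∈ ({x, y} : Finset α), r ∈ R := by grind
  have hcard : #{p, q, r} = 3 := card_eq_three.2 ⟨p, q, r, by grind⟩
  obtain rfl : {p, q, r} = R := eq_of_subset_of_card_le (by grind) (by lia)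
  refine ⟨3, hcard.ge, hT _ (mem_image.2 ⟨(p, q, r), ?_, rfl⟩) hmiss⟩
  simp only [mem_product, hp, hq, hr, and_self]

open Classical in
theorem exists_isLevelSystem_of_path {a b c d x : α} (hab : F.Adj a b)
    (hax : F.Adj a x) (hcd : F.Adj c d) (hnodup : [a, b, c, d, x].Nodup) :
    ∃ T : Finset (Sym2 α), #T ≤ 3 ∧ IsLevelSystem F ![∅, {s(a, b), s(c, d)}, T] ∧
      s(a, x) ∈ T := by
  obtain ⟨T, hTcard, hT⟩ := exists_avoiding_edges F {{a, c}, {a, d}}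
  refine ⟨insert s(a, x) T, (card_insert_le _ _).trans (Nat.succ_le_succ
    (hTcard.trans card_le_two)), fun R hR hRcard hmiss ↦ ?_, mem_insert_self _ _⟩
  by_cases habR : a ∉ R ∧ b ∉ R
  · exact ⟨1, hR.card_pos, s(a, b), by simp, hab, forall_mem_mk_notMem.2 habR⟩
  by_cases hcdR : c ∉ R ∧ d ∉ R
  · exact ⟨1, hR.card_pos, s(c, d), by simp, hcd, forall_mem_mk_notMem.2 hcdR⟩
  obtain ⟨p, hp, hpR⟩ : ∃ p ∈ ({a, b} : Finset α), p ∈ R := by grind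
  obtain ⟨q, hq, hqR⟩ : ∃ q ∈ ({c, d} : Finset α), q ∈ R := by grind
  have hcard : #{p, q} = 2 := card_pair (by grind)
  obtain rfl : {p, q} = R := eq_of_subset_of_card_le (by grind) (by lia)
  refine ⟨2, hcard.ge, ?_⟩
  by_cases haR : a ∈ ({p, q} : Finset α)
  · obtain ⟨e, heT, he⟩ := hT {p, q} (by grind) hmiss
    exact ⟨e, mem_insert_of_mem heT, he⟩
  · exact ⟨s(a, x), mem_insert_self _ _, hax, forall_mem_mk_notMem.2 ⟨haR, by grind⟩⟩

end LevelSystems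

section CountingEdges

variable {α : Type*} [Fintype α] {F : SimpleGraph α}

open Classical in
theorem card_edgeFinset_le_of_cover {S : Finset α} (hS : ∀ e ∈ F.edgeSet, ∃ x ∈ e, x ∈ S) :
    #F.edgeFinset ≤ (#S).choose 2 + ∑ u ∈ S, #{y | y ∉ S ∧ F.Adj u y} := by
  have hsub : F.edgeFinset ⊆ S.offDiag.image (fun p ↦ s(p.1, p.2)) ∪
      S.biUnion fun u ↦ image (s(u, ·)) {y | y ∉ S ∧ F.Adj u y} := by
    intro e he
    rw [SimpleGraph.mem_edgeFinset] at he
    obtain ⟨u, ⟨v, rfl⟩, hu⟩ := hS e he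
    rw [mem_union]
    by_cases hv : v ∈ S
    · exact .inl (mem_image.2 ⟨(u, v), mem_offDiag.2 ⟨hu, hv, he.ne⟩, rfl⟩)
    · exact .inr (mem_biUnion.2 ⟨u, hu, mem_image.2 ⟨v, by simpa [hv] using he, rfl⟩⟩)
  exact (card_le_card hsub).trans <| (card_union_le _ _).trans <|
    Nat.add_le_add (Sym2.card_image_offDiag S).le
      (card_biUnion_le.trans (sum_le_sum fun u _ ↦ card_image_le))

open Classical in
theorem card_neighbors_add_card_neighbors_le {α : Type*} {F : SimpleGraph α} {a b : α}
    {I : Finset α} (hI : 2 ≤ #I)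
    (hmeet : ∀ y ∈ I, ∀ z ∈ I, F.Adj a y → F.Adj b z → y = z) :
    #{y ∈ I | F.Adj a y} + #{z ∈ I | F.Adj b z} ≤ #I := by
  obtain ha | ⟨y, hy⟩ := {y ∈ I | F.Adj a y}.eq_empty_or_nonempty
  · simp [ha, card_filter_le]
  obtain hb | ⟨z, hz⟩ := {z ∈ I | F.Adj b z}.eq_empty_or_nonempty
  · simp [hb, card_filter_le]
  simp only [mem_filter] at hy hz
  have ha : #{y ∈ I | F.Adj a y} ≤ 1 := card_le_one.2 (by grind)
  have hb : #{z ∈ I | F.Adj b z} ≤ 1 := card_le_one.2 (by grind)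
  lia

theorem exists_mem_of_no_three_disjoint_edges {α : Type*} {F : SimpleGraph α} {a b c d : α}
    (hnodup : [a, b, c, d].Nodup) (hthree : ∀ x y, F.Adj x y → ¬ [a, b, c, d, x, y].Nodup) :
    ∀ e ∈ F.edgeSet, ∃ x ∈ e, x ∈ [a, b, c, d] := by
  rintro ⟨u, v⟩ he
  by_contra! hmem
  have hu := hmem u (Sym2.mem_mk_left u v)
  have hv := hmem v (Sym2.mem_mk_right u v)
  have huv := SimpleGraph.ne_of_adj F he
  refine hthree u v he ?_
  clear hthree hmem
  simp only [List.nodup_cons, List.mem_cons, List.not_mem_nil, not_or] at hu hv hnodup ⊢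
  grind

open Classical in
theorem card_edgeFinset_le_of_no_three_disjoint_edges {a b c d : α} (hab : F.Adj a b)
    (hcd : F.Adj c d) (hnodup : [a, b, c, d].Nodup) (hk : 6 ≤ Fintype.card α)
    (hthree : ∀ a b c d x y, F.Adj a b → F.Adj c d → F.Adj x y → ¬ [a, b, c, d, x, y].Nodup) :
    #F.edgeFinset ≤ 2 * Fintype.card α - 2 := by
  set S := [a, b, c, d].toFinset with hS
  have hScard : #S = 4 := List.toFinset_card_of_nodup hnodup
  have hI : #{y | y ∉ S} = Fintype.card α - 4 := by
    rw [filter_not, filter_univ_mem, ← compl_eq_univ_sdiff, card_compl, hScard]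
  have hcover := card_edgeFinset_le_of_cover (F := F) (S := S) <| by
    simpa only [hS, List.mem_toFinset] using
      exists_mem_of_no_three_disjoint_edges hnodup (hthree a b c d · · hab hcd)
  have hpair {a b c d : α} (hcd : F.Adj c d) (hnodup : [a, b, c, d].Nodup)
      (hS' : [a, b, c, d].toFinset = S) :
      #{y | y ∉ S ∧ F.Adj a y} + #{y | y ∉ S ∧ F.Adj b y} ≤ Fintype.card α - 4 := by
    rw [← hI, ← filter_filter, ← filter_filter]
    refine card_neighbors_add_card_neighbors_le (by lia) fun y hy z hz hay hbz ↦ ?_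
    by_contra hyz
    refine hthree a y b z c d hay hbz hcd ?_
    clear hthree hI
    simp only [← hS', mem_filter_univ, List.mem_toFinset, List.nodup_cons, List.mem_cons,
      List.not_mem_nil, not_or] at hy hz hnodup ⊢
    grind
  have hab' := hpair hcd hnodup rfl
  have hperm : [c, d, a, b].Perm [a, b, c, d] := List.perm_append_comm (l₁ := [c, d])
  have hcd' := hpair hab (hperm.nodup_iff.2 hnodup) (List.toFinset_eq_of_perm _ _ hperm)
  rw [hScard, hS, List.sum_toFinset _ hnodup, ← hS] at hcover
  simp only [List.map_cons, List.map_nil, List.sum_cons, List.sum_nil,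
    show Nat.choose 4 2 = 6 from rfl] at hcover
  lia

end CountingEdges

section Rates

variable {α β : Type*} [Fintype α] [Fintype β] {F : SimpleGraph α} {G : SimpleGraph β} {ε x : ℝ}

open Classical in
theorem card_edgeFinset_mul_pow_four_le (hx : x ^ 2 * Fintype.card α = 1) :
    #F.edgeFinset * x ^ 4 ≤ (1 - x ^ 2) / 2 := by
  have he : (#F.edgeFinset : ℝ) ≤ Fintype.card α * (Fintype.card α - 1) / 2 := by
    rw [← Nat.cast_choose_two]
    exact_mod_cast SimpleGraph.card_edgeFinset_le_card_choose_two
  calc #F.edgeFinset * x ^ 4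
      ≤ (Fintype.card α * (Fintype.card α - 1) / 2) * x ^ 4 := by gcongr
    _ = (x ^ 2 * Fintype.card α) * (x ^ 2 * Fintype.card α - x ^ 2) / 2 := by ring
    _ = (1 - x ^ 2) / 2 := by rw [hx, one_mul]

theorem inv_sqrt_sq_mul {k : ℕ} (hk : k ≠ 0) : (√(k : ℝ))⁻¹ ^ 2 * k = 1 := by
  rw [inv_pow, Real.sq_sqrt k.cast_nonneg, inv_mul_cancel₀ (Nat.cast_ne_zero.2 hk)]

theorem inv_sqrt_le_one (k : ℕ) : (√(k : ℝ))⁻¹ ≤ 1 := by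
  obtain rfl | hk := k.eq_zero_or_pos
  · simp
  · exact inv_le_one_of_one_le₀ (Real.one_le_sqrt.2 (mod_cast hk))

open Classical in
theorem sum_levelWeight_le_of_depth_four {A B T : Finset (Sym2 α)} (hA : #A ≤ 2) (hB : #B ≤ 1)
    (hT : #T ≤ 8) (hx₀ : 0 ≤ x) (hx : x ^ 2 * Fintype.card α = 1) (hx₂ : x ^ 2 ≤ 1 / 6) :
    ∑ e ∈ F.edgeFinset, levelWeight x ![∅, A, B, T] e ≤ 1 / 2 + 57 / 20 * x := by
  have hx₁ : x ≤ 41 / 100 := by nlinarith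
  have hlevels := sum_levelWeight_le (t := 4) hx₀ (hx₁.trans (by norm_num))
    (L := ![∅, A, B, T]) (m := ![0, 2, 1, 8]) (by simp [Fin.forall_fin_succ, hA, hB, hT])
    F.edgeFinset
  simp only [Fin.sum_univ_four, Matrix.cons_val, Fin.coe_ofNat_eq_mod, Nat.reduceMod,
    Nat.cast_ofNat, Nat.cast_zero, Nat.cast_one, zero_mul, pow_one] at hlevels
  have he := card_edgeFinset_mul_pow_four_le (F := F) hx
  have hcubic : x / 2 + 8 * x ^ 2 - 11 * x ^ 3 ≤ 17 / 20 := by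
    nlinarith [mul_nonneg hx₀ (sub_nonneg.2 hx₁)]
  calc _ ≤ (1 - x ^ 2) / 2 + 2 * (x - x ^ 4) + (x ^ 2 - x ^ 4) + 8 * (x ^ 3 - x ^ 4) := by
        linarith
    _ = 1 / 2 + 2 * x + x * (x / 2 + 8 * x ^ 2 - 11 * x ^ 3) := by ring
    _ ≤ 1 / 2 + 2 * x + x * (17 / 20) := by gcongr
    _ = _ := by ring

theorem card_pair_mk_eq_two {α : Type*} [DecidableEq α] {a b c d : α}
    (hnodup : [a, b, c, d].Nodup) : #({s(a, b), s(c, d)} : Finset (Sym2 α)) = 2 :=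
  card_pair fun heq ↦ by
    have ha : a ∈ s(c, d) := heq ▸ Sym2.mem_mk_left a b
    simp only [Sym2.mem_iff] at ha
    grind

open Classical in
theorem two_mul_sq_le_sum_sq_levelWeight {α : Type*} {t : ℕ} {L : Fin (t + 2) → Finset (Sym2 α)}
    (hx₀ : 0 ≤ x) (hx₁ : x ≤ 1) {a b c d : α} (hnodup : [a, b, c, d].Nodup)
    (hL : {s(a, b), s(c, d)} ⊆ L 1) :
    2 * x ^ 2 ≤ ∑ e ∈ ({s(a, b), s(c, d)} : Finset (Sym2 α)), levelWeight x L e ^ 2 := by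
  have hcard := card_pair_mk_eq_two hnodup
  calc 2 * x ^ 2 = #({s(a, b), s(c, d)} : Finset (Sym2 α)) • x ^ 2 := by simp [hcard]
    _ ≤ _ := card_nsmul_le_sum _ _ _ fun e he ↦ pow_le_pow_left₀ hx₀ ?_ 2
  simpa using pow_le_levelWeight_of_mem hx₀ hx₁ (hL he)

open Classical in
theorem FarFromFree.hasUniformlyFarSubgraph_of_three_disjoint_edges (h : FarFromFree F G ε)
    (hε : 0 ≤ ε) (hn : 64 ≤ Fintype.card β) {a b c d u v : α} (hab : F.Adj a b) (hcd : F.Adj c d)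
    (huv : F.Adj u v) (hnodup : [a, b, c, d, u, v].Nodup) :
    HasUniformlyFarSubgraph F G (ε / (Fintype.card α : ℝ) ^ Fintype.card α) := by
  have hk : 6 ≤ Fintype.card α := hnodup.length_le_card
  obtain ⟨T, hT, hL⟩ := exists_isLevelSystem_of_three_disjoint_edges hab hcd huv hnodup
  have hν := edgeProductBound_of_matching (F := F) (M := [(a, b), (c, d), (u, v)]) (by simp)
    (by simp [hab, hcd, huv]) hnodup
  set x := (√(Fintype.card α : ℝ))⁻¹
  have hx₀ : 0 ≤ x := by positivity
  have hx : x ^ 2 * Fintype.card α = 1 := inv_sqrt_sq_mul (by lia)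
  have hx₂ : x ^ 2 ≤ 1 / 6 := by
    have : (6 : ℝ) ≤ Fintype.card α := mod_cast hk
    nlinarith
  have hx₁ : x ≤ 41 / 100 := by nlinarith
  have hz := sum_levelWeight_le_of_depth_four (F := F) (A := {s(a, b), s(c, d)})
    (B := {s(u, v)}) card_le_two (card_singleton _).le hT hx₀ hx hx₂
  have hsub : {s(a, b), s(c, d)} ⊆ F.edgeFinset := by simp [insert_subset_iff, hab, hcd]
  have hpair : [a, b, c, d].Nodup := hnodup.sublist (by simp)
  have hy := (two_mul_sq_le_sum_sq_levelWeight hx₀ (inv_sqrt_le_one _) hpair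
    (L := ![∅, {s(a, b), s(c, d)}, {s(u, v)}, T]) subset_rfl).trans
    (sum_le_sum_of_subset_of_nonneg hsub fun _ _ _ ↦ sq_nonneg _)
  refine h.hasUniformlyFarSubgraph_of_isLevelSystem hε ⟨s(a, b), hab⟩ hL
    (by norm_num) hν (by linarith) hy hz ?_
  have hn : 1 / (4 * (Fintype.card β : ℝ)) ≤ 1 / (4 * 64) := by
    gcongr
    exact_mod_cast hn
  calc (1 / 4 + ((2 * [(a, b), (c, d), (u, v)].length : ℝ) ^ 2)⁻¹ + 1 / (4 * Fintype.card β)) * _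
      ≤ (1 / 4 + 1 / 36 + 1 / (4 * 64)) *
          (1 - 2 * (41 / 100) ^ 2 + (1 / 2 + 57 / 20 * (41 / 100)) ^ 2) := by
        gcongr ?_ * ?_
        · nlinarith
        · norm_num at hn ⊢
          linarith
        · nlinarith
    _ ≤ 1 := by norm_num

open Classical in
theorem sum_levelWeight_le_of_depth_three {α : Type*} [Fintype α] {F : SimpleGraph α}
    {A T : Finset (Sym2 α)} (hA : #A ≤ 2) (hT : #T ≤ 3) (hx₀ : 0 ≤ x) (hx₁ : x ≤ 1) :
    ∑ e ∈ F.edgeFinset, levelWeight x ![∅, A, T] e ≤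
      #F.edgeFinset * x ^ 3 + (2 * (x - x ^ 3) + 3 * (x ^ 2 - x ^ 3)) := by
  simpa [Fin.sum_univ_three] using sum_levelWeight_le (t := 3) hx₀ hx₁ (L := ![∅, A, T])
    (m := ![0, 2, 3]) (by simp [Fin.forall_fin_succ, hA, hT]) F.edgeFinset

open Classical in
theorem two_mul_sq_add_pow_four_le_sum_sq_levelWeight {A : Finset (Sym2 α)} (hx₀ : 0 ≤ x)
    (hx₁ : x ≤ 1) {a b c d u : α} (hab : F.Adj a b) (hau : F.Adj a u) (hcd : F.Adj c d)
    (hnodup : [a, b, c, d, u].Nodup) (hA : s(a, u) ∈ A) :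
    2 * x ^ 2 + x ^ 4 ≤
      ∑ e ∈ F.edgeFinset, levelWeight x ![∅, {s(a, b), s(c, d)}, A] e ^ 2 := by
  set L : Fin 3 → Finset (Sym2 α) := ![∅, {s(a, b), s(c, d)}, A]
  have hsub : insert s(a, u) {s(a, b), s(c, d)} ⊆ F.edgeFinset := by
    simp [insert_subset_iff, hab, hau, hcd]
  have hnotMem : s(a, u) ∉ ({s(a, b), s(c, d)} : Finset (Sym2 α)) := by
    simp only [mem_insert, mem_singleton, Sym2.eq_iff]
    grind
  have hpair : [a, b, c, d].Nodup := hnodup.sublist (by simp)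
  have htwo := two_mul_sq_le_sum_sq_levelWeight (L := L) hx₀ hx₁ hpair subset_rfl
  have hau := pow_le_levelWeight_of_mem (L := L) (i := 2) hx₀ hx₁ hA
  calc 2 * x ^ 2 + x ^ 4 = (x ^ 2) ^ 2 + 2 * x ^ 2 := by ring
    _ ≤ levelWeight x L s(a, u) ^ 2 + ∑ e ∈ {s(a, b), s(c, d)}, levelWeight x L e ^ 2 :=
        add_le_add (pow_le_pow_left₀ (sq_nonneg x) hau 2) htwo
    _ = ∑ e ∈ insert s(a, u) {s(a, b), s(c, d)}, levelWeight x L e ^ 2 :=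
        (sum_insert (f := fun e ↦ levelWeight x L e ^ 2) hnotMem).symm
    _ ≤ _ := sum_le_sum_of_subset_of_nonneg hsub fun _ _ _ ↦ sq_nonneg _

open Classical in
theorem FarFromFree.hasUniformlyFarSubgraph_of_path_of_rate_le (h : FarFromFree F G ε) (hε : 0 ≤ ε)
    (hn : 280 ≤ Fintype.card β) {a b c d u : α} (hab : F.Adj a b) (hau : F.Adj a u)
    (hcd : F.Adj c d) (hnodup : [a, b, c, d, u].Nodup) (hx : x = (√(Fintype.card α : ℝ))⁻¹)
    {z : ℝ} (hz : #F.edgeFinset * x ^ 3 + (2 * (x - x ^ 3) + 3 * (x ^ 2 - x ^ 3)) ≤ z)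
    (hrate : (1 / 4 + 1 / 23 + 1 / (4 * 280)) * (1 - (2 * x ^ 2 + x ^ 4) + z ^ 2) ≤ 1) :
    HasUniformlyFarSubgraph F G (ε / (Fintype.card α : ℝ) ^ Fintype.card α) := by
  have hk : 5 ≤ Fintype.card α := hnodup.length_le_card
  obtain ⟨T, hT, hL, hauT⟩ := exists_isLevelSystem_of_path hab hau hcd hnodup
  subst hx
  set x := (√(Fintype.card α : ℝ))⁻¹
  have hx₀ : 0 ≤ x := by positivity
  have hx₁ : x ≤ 1 := inv_sqrt_le_one _
  have hx₂ : x ^ 2 ≤ 1 / 5 := by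
    have : (5 : ℝ) ≤ Fintype.card α := mod_cast hk
    have : x ^ 2 * Fintype.card α = 1 := inv_sqrt_sq_mul (by lia)
    nlinarith
  have hy := two_mul_sq_add_pow_four_le_sum_sq_levelWeight hx₀ hx₁ hab hau hcd hnodup hauT
  have hz' := (sum_levelWeight_le_of_depth_three (F := F) (A := {s(a, b), s(c, d)}) card_le_two
    hT hx₀ hx₁).trans hz
  refine h.hasUniformlyFarSubgraph_of_isLevelSystem hε ⟨s(a, b), hab⟩ hL (by norm_num)
    (edgeProductBound_of_path hab hau hcd hnodup) (by nlinarith) hy hz' ?_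
  have hn : 1 / (4 * (Fintype.card β : ℝ)) ≤ 1 / (4 * 280) := by
    gcongr
    exact_mod_cast hn
  refine hrate.trans' ?_
  gcongr
  nlinarith

theorem FarFromFree.hasUniformlyFarSubgraph_of_path_of_six_le_card (h : FarFromFree F G ε)
    (hε : 0 ≤ ε) (hn : 280 ≤ Fintype.card β) (hk : 6 ≤ Fintype.card α) {a b c d u : α}
    (hab : F.Adj a b) (hau : F.Adj a u) (hcd : F.Adj c d) (hnodup : [a, b, c, d, u].Nodup)
    (hthree : ∀ a b c d x y, F.Adj a b → F.Adj c d → F.Adj x y → ¬ [a, b, c, d, x, y].Nodup) :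
    HasUniformlyFarSubgraph F G (ε / (Fintype.card α : ℝ) ^ Fintype.card α) := by
  classical
  set x := (√(Fintype.card α : ℝ))⁻¹ with hx'
  have hx₀ : 0 ≤ x := by positivity
  have hx : x ^ 2 * Fintype.card α = 1 := inv_sqrt_sq_mul (by lia)
  have hx₂ : x ^ 2 ≤ 1 / 6 := by
    have : (6 : ℝ) ≤ Fintype.card α := mod_cast hk
    nlinarith
  have he : (#F.edgeFinset : ℝ) ≤ 2 * Fintype.card α - 2 := by
    have hle := card_edgeFinset_le_of_no_three_disjoint_edges hab hcd
      (hnodup.sublist (by simp)) hk hthree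
    have : #F.edgeFinset + 2 ≤ 2 * Fintype.card α := by lia
    rw [le_sub_iff_add_le]
    exact_mod_cast this
  refine h.hasUniformlyFarSubgraph_of_path_of_rate_le hε hn hab hau hcd hnodup hx'
    (z := x * (23 / 5 - 13 / 4 * x ^ 2)) ?_ ?_
  · calc _ ≤ (2 * Fintype.card α - 2) * x ^ 3 + (2 * (x - x ^ 3) + 3 * (x ^ 2 - x ^ 3)) := by
          gcongr
      _ = 2 * x * (x ^ 2 * Fintype.card α) + x * (2 + 3 * x - 7 * x ^ 2) := by ring
      _ = x * (4 + 3 * x - 7 * x ^ 2) := by rw [hx]; ring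
      _ ≤ _ := by
          refine mul_le_mul_of_nonneg_left ?_ hx₀
          linarith [sq_nonneg (5 * x - 2)]
  · have hpoly : 1 - (2 * x ^ 2 + x ^ 4) + (x * (23 / 5 - 13 / 4 * x ^ 2)) ^ 2 ≤ 339 / 100 := by
      have := mul_nonneg (sq_nonneg x) (sub_nonneg.2 hx₂)
      nlinarith [mul_nonneg this (sub_nonneg.2 hx₂)]
    linarith

theorem FarFromFree.hasUniformlyFarSubgraph_of_path_of_card_eq_five (h : FarFromFree F G ε)
    (hε : 0 ≤ ε) (hn : 280 ≤ Fintype.card β) (hk : Fintype.card α = 5) {a b c d u : α}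
    (hab : F.Adj a b) (hau : F.Adj a u) (hcd : F.Adj c d) (hnodup : [a, b, c, d, u].Nodup) :
    HasUniformlyFarSubgraph F G (ε / (Fintype.card α : ℝ) ^ Fintype.card α) := by
  classical
  by_cases he : #F.edgeFinset ≤ 7
  · set x := (√(Fintype.card α : ℝ))⁻¹ with hx'
    have hx₀ : 0 ≤ x := by positivity
    have hx : x ^ 2 = 1 / 5 := by
      have : x ^ 2 * Fintype.card α = 1 := inv_sqrt_sq_mul (by lia)
      rw [hk, Nat.cast_ofNat] at this
      linarith
    refine h.hasUniformlyFarSubgraph_of_path_of_rate_le hε hn hab hau hcd hnodup hx'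
      (z := 12 / 5 * x + 3 / 5) ?_ ?_
    · calc _ ≤ 7 * x ^ 3 + (2 * (x - x ^ 3) + 3 * (x ^ 2 - x ^ 3)) := by
            gcongr
            exact_mod_cast he
        _ = 2 * x + 3 * x ^ 2 + 2 * x * x ^ 2 := by ring
        _ = 12 / 5 * x + 3 / 5 := by rw [hx]; ring
    · have hx₁ : x ≤ 9 / 20 := by nlinarith
      nlinarith
  · have hmissing := card_missingPairs_add (F := F) (S := univ) (by simp)
    rw [card_univ, hk, show Nat.choose 5 2 = 10 from rfl] at hmissing
    obtain ⟨w, v, w', v', hwv, hT, hwv', hT', hne⟩ :=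
      exists_two_areTwins_of_missingPairs (F := F) (S := univ) (by simp) (by simp [hk]) (by lia)
    refine h.hasUniformlyFarSubgraph_of_automorphisms hε ⟨s(a, b), hab⟩ (by norm_num)
      (edgeProductBound_of_path hab hau hcd hnodup) ?_
    have hn : 1 / (4 * (Fintype.card β : ℝ)) ≤ 1 / (4 * 280) := by
      gcongr
      exact_mod_cast hn
    calc _ ≤ (1 / 4 + 1 / 23 + 1 / (4 * 280)) * (10 : ℝ) := by
          gcongr
          exact_mod_cast (by lia : #F.edgeFinset ≤ 10)
      _ ≤ 3 := by norm_num
      _ ≤ _ := mod_cast three_le_card_automorphisms hwv hT hwv' hT' hne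

end Rates

section Dichotomies

variable {α β : Type*} {F : SimpleGraph α} {G : SimpleGraph β} {ε : ℝ}

theorem eq_or_eq_of_not_nodup {a b c d : α} (hab : F.Adj a b) (hcd : F.Adj c d)
    (h : ¬ [a, b, c, d].Nodup) : a = c ∨ a = d ∨ b = c ∨ b = d := by
  simp only [List.nodup_cons, List.mem_cons, List.not_mem_nil, List.nodup_nil, hab.ne, hcd.ne] at h
  tauto

theorem exists_star_or_triangle (hF : F.edgeSet.Nonempty)
    (htwo : ∀ a b c d, F.Adj a b → F.Adj c d → ¬ [a, b, c, d].Nodup) :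
    (∃ a b, F.Adj a b ∧ ∀ e ∈ F.edgeSet, a ∈ e) ∨
      ∃ S : Finset α, #S = 3 ∧ ∀ e ∈ F.edgeSet, ∀ x ∈ e, x ∈ S := by
  classical
  obtain ⟨⟨a, b⟩, hab⟩ := hF
  change F.Adj a b at hab
  have hmeet {p q r s : α} (hpq : F.Adj p q) (hrs : F.Adj r s) :=
    eq_or_eq_of_not_nodup hpq hrs (htwo p q r s hpq hrs)
  have hthird {a b : α} (hab : F.Adj a b) (hstar : ¬ ∀ e ∈ F.edgeSet, a ∈ e) :
      ∃ x, F.Adj b x ∧ x ≠ a := by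
    push Not at hstar
    obtain ⟨⟨u, v⟩, huv, ha⟩ := hstar
    change F.Adj u v at huv
    have hne : a ≠ u ∧ a ≠ v := by simpa using ha
    obtain rfl | rfl : b = u ∨ b = v := by
      have := hmeet hab huv
      tauto
    · exact ⟨v, huv, hne.2.symm⟩
    · exact ⟨u, huv.symm, hne.1.symm⟩
  by_cases ha : ∀ e ∈ F.edgeSet, a ∈ e
  · exact .inl ⟨a, b, hab, ha⟩
  by_cases hb : ∀ e ∈ F.edgeSet, b ∈ e
  · exact .inl ⟨b, a, hab.symm, hb⟩
  obtain ⟨x, hbx, hxa⟩ := hthird hab ha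
  obtain ⟨y, hay, hyb⟩ := hthird hab.symm hb
  obtain rfl : x = y := by
    have := hmeet hbx hay
    have := hab.ne
    tauto
  refine .inr ⟨{a, b, x}, card_eq_three.2 ⟨a, b, x, hab.ne, hay.ne, hbx.ne, rfl⟩, ?_⟩
  rintro ⟨u, v⟩ huv w hw
  have hab' := hmeet hab huv
  have hax' := hmeet hay huv
  have hbx' := hmeet hbx huv
  have := hab.ne
  have hw : w = u ∨ w = v := Sym2.mem_iff.1 hw
  grind

variable [Fintype α] [Fintype β]

theorem FarFromFree.hasUniformlyFarSubgraph_of_path (h : FarFromFree F G ε) (hε : 0 ≤ ε)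
    (hn : Fintype.card α ^ (Fintype.card α + 2) < Fintype.card β ^ 2) {a b c d u : α}
    (hab : F.Adj a b) (hau : F.Adj a u) (hcd : F.Adj c d) (hnodup : [a, b, c, d, u].Nodup)
    (hthree : ∀ a b c d x y, F.Adj a b → F.Adj c d → F.Adj x y → ¬ [a, b, c, d, x, y].Nodup) :
    HasUniformlyFarSubgraph F G (ε / (Fintype.card α : ℝ) ^ Fintype.card α) := by
  have hk : 5 ≤ Fintype.card α := hnodup.length_le_card
  have hn' : 280 ≤ Fintype.card β := lt_of_sq_le_pow_add_two (N := 279) (by simp) hk (by simp) hn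
  obtain hk | hk := hk.eq_or_lt
  · exact h.hasUniformlyFarSubgraph_of_path_of_card_eq_five hε hn' hk.symm hab hau hcd hnodup
  · exact h.hasUniformlyFarSubgraph_of_path_of_six_le_card hε hn' hk hab hau hcd hnodup hthree

theorem FarFromFree.hasUniformlyFarSubgraph_of_edge_leaving_two_disjoint_edges
    (h : FarFromFree F G ε) (hε : 0 ≤ ε)
    (hn : Fintype.card α ^ (Fintype.card α + 2) < Fintype.card β ^ 2) {a b c d p q : α}
    (hab : F.Adj a b) (hcd : F.Adj c d) (hnodup : [a, b, c, d].Nodup) (hpq : F.Adj p q)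
    (hp : p ∈ [a, b, c, d]) (hq : q ∉ [a, b, c, d])
    (hthree : ∀ a b c d x y, F.Adj a b → F.Adj c d → F.Adj x y → ¬ [a, b, c, d, x, y].Nodup) :
    HasUniformlyFarSubgraph F G (ε / (Fintype.card α : ℝ) ^ Fintype.card α) := by
  have hnodup' : [a, b, c, d, q].Nodup := (List.nodup_concat [a, b, c, d] q).2 ⟨hq, hnodup⟩
  have hperm : [a, b, c, d, q].Perm [c, d, a, b, q] :=
    (List.perm_append_comm (l₁ := [a, b]) (l₂ := [c, d])).append_right [q]
  simp only [List.mem_cons, List.not_mem_nil, or_false] at hp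
  obtain rfl | rfl | rfl | rfl := hp
  · exact h.hasUniformlyFarSubgraph_of_path hε hn hab hpq hcd hnodup' hthree
  · refine h.hasUniformlyFarSubgraph_of_path hε hn hab.symm hpq hcd ?_ hthree
    exact (List.Perm.swap _ _ _).nodup_iff.1 hnodup'
  · refine h.hasUniformlyFarSubgraph_of_path hε hn hcd hpq hab ?_ hthree
    exact hperm.nodup_iff.1 hnodup'
  · refine h.hasUniformlyFarSubgraph_of_path hε hn hcd.symm hpq hab ?_ hthree
    exact (hperm.trans (List.Perm.swap _ _ _)).nodup_iff.1 hnodup'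

theorem FarFromFree.hasUniformlyFarSubgraph_of_two_disjoint_edges (h : FarFromFree F G ε)
    (hε : 0 ≤ ε) (hn : Fintype.card α ^ (Fintype.card α + 2) < Fintype.card β ^ 2) {a b c d : α}
    (hab : F.Adj a b) (hcd : F.Adj c d) (hnodup : [a, b, c, d].Nodup) :
    HasUniformlyFarSubgraph F G (ε / (Fintype.card α : ℝ) ^ Fintype.card α) := by
  have hk : 4 ≤ Fintype.card α := hnodup.length_le_card
  have hn' : 64 ≤ Fintype.card β := lt_of_sq_le_pow_add_two (N := 63) (by simp) hk (by simp) hn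
  by_cases! hthree : ∃ a b c d x y, F.Adj a b ∧ F.Adj c d ∧ F.Adj x y ∧ [a, b, c, d, x, y].Nodup
  · obtain ⟨a, b, c, d, x, y, hab, hcd, hxy, hnodup⟩ := hthree
    exact h.hasUniformlyFarSubgraph_of_three_disjoint_edges hε hn' hab hcd hxy hnodup
  by_cases! hinside : ∀ e ∈ F.edgeSet, ∀ x ∈ e, x ∈ [a, b, c, d]
  · exact h.hasUniformlyFarSubgraph_of_card_eq_four hε hn' hab hcd hnodup hinside
  obtain ⟨e, he, q, hqe, hq⟩ := hinside
  obtain ⟨p, hpe, hp⟩ :=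
    exists_mem_of_no_three_disjoint_edges hnodup (hthree a b c d · · hab hcd) e he
  obtain rfl := (Sym2.mem_and_mem_iff (ne_of_mem_of_not_mem hp hq)).1 ⟨hpe, hqe⟩
  exact h.hasUniformlyFarSubgraph_of_edge_leaving_two_disjoint_edges hε hn hab hcd hnodup he hp hq
    hthree

theorem FarFromFree.hasUniformlyFarSubgraph {β : Type*} [Finite β] {G : SimpleGraph β}
    (h : FarFromFree F G ε) (hε : 0 < ε) (hF : F.edgeSet.Nonempty) :
    HasUniformlyFarSubgraph F G (ε / (Fintype.card α : ℝ) ^ Fintype.card α) := by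
  have := Fintype.ofFinite β
  obtain hn | hn := le_or_gt (Fintype.card β ^ 2) (Fintype.card α ^ (Fintype.card α + 2))
  · exact h.hasUniformlyFarSubgraph_of_sq_le hε hF hn
  by_cases! htwo : ∃ a b c d, F.Adj a b ∧ F.Adj c d ∧ [a, b, c, d].Nodup
  · obtain ⟨a, b, c, d, hab, hcd, hnodup⟩ := htwo
    exact h.hasUniformlyFarSubgraph_of_two_disjoint_edges hε.le hn hab hcd hnodup
  obtain ⟨a, b, hab, hstar⟩ | ⟨S, hcard, hS⟩ := exists_star_or_triangle hF htwo
  · exact h.hasUniformlyFarSubgraph_of_star hε.le hab hstar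
  · have hk : 3 ≤ Fintype.card α := hcard ▸ card_le_univ S
    exact h.hasUniformlyFarSubgraph_of_card_eq_three hε.le hF
      (lt_of_sq_le_pow_add_two (by simp) hk (by simp) hn) hcard hS

end Dichotomies

/-- If `F` has at least one edge and the `n`-vertex graph `G` is
`ε`-far from `F`-free, then `G` has a subgraph `G'` with at least
`(ε/|V(F)|^{|V(F)|})^{1/2}·n` vertices that is uniformly
`ε/(2·|V(F)|^{|V(F)|})`-far from `F`-free. -/
theorem stmt_8 {α β : Type*} [Fintype α] [Fintype β]
    (F : SimpleGraph α) (G : SimpleGraph β) (ε : ℝ) (hε : 0 < ε)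
    (hF : F.edgeSet.Nonempty) (h : FarFromFree F G ε) :
    ∃ G' : G.Subgraph, ∃ π : G'.coe →g F,
      Real.sqrt (ε / (Nat.card α : ℝ) ^ (Nat.card α)) * (Nat.card β : ℝ) ≤
        (Nat.card G'.verts : ℝ) ∧
      UniformlyFarWith F G'.coe π (ε / (2 * (Nat.card α : ℝ) ^ (Nat.card α))) := by
  rw [Nat.card_eq_fintype_card (α := α), mul_comm 2, ← div_div]
  exact h.hasUniformlyFarSubgraph hε hF
end

section
/- Let F be a graph with at least one edge. Then every F-splittable graph is F-abundant. -/
/-- `H` is `F`-splittable: there is an `F`-colouring `σ` of `H` such that every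
subgraph of `H` with at least one edge has an edge cut-set whose edges span only two
colours, i.e. its vertex set can be partitioned into two nonempty parts such that every
crossing edge joins a vertex of colour `a` to a vertex of colour `b`. -/
def Splittable {α β : Type*} (F : SimpleGraph α) (H : SimpleGraph β) : Prop :=
  ∃ σ : H →g F, ∀ H' : H.Subgraph, H'.edgeSet.Nonempty →
    ∃ (a b : α) (X Y : Set β), X.Nonempty ∧ Y.Nonempty ∧ Disjoint X Y ∧
      X ∪ Y = H'.verts ∧
      ∀ x y, H'.Adj x y → x ∈ X → y ∈ Y →
        ((σ x = a ∧ σ y = b) ∨ (σ x = b ∧ σ y = a))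

/-!
A maximal edge-disjoint family `𝓕` of copies of `F` in `G` has density `δ` of order `ε`, as deleting
all its edges destroys every copy of `F`. Colour the edges of these copies by the edges of `F`. By
induction on `S ⊆ V(H)`, a proportion at least `δ ^ p` of all maps `V(H) → V(G)` respects the
colours of the vertices and edges of `H` in `S`. To join the two sides `X` and `Y` of a cut of
`S` crossed by a single colour `e = cd`, call `f, g ∈ 𝓕` crossing if `f c` and `g d`, as well as
`g c` and `f d`, span an edge of colour `e`. By Cauchy–Schwarz (the count of four-cycles in a
bipartite graph) there are many crossing pairs. Apply the induction hypothesis to `X` and the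
family of all `g` crossing a given `f`: summing over `f` shows that an average map `φ` on `X` is
joined correctly to `d` or `c` in many `f`. These `f` form a family from which to extend `φ`
to `Y`, again by induction, and the power mean inequality averages over `φ`. The maps obtained for
`S = V(H)` are homomorphisms `H → G`, of which only `O(n ^ (|V(H)| - 1))` fail to be injective.
-/

open Finset

lemma mul_pow_le_sum_pow {ι : Type*} {s : Finset ι} {f : ι → ℝ} {M t : ℝ} {p : ℕ}
    (hf : ∀ i ∈ s, 0 ≤ f i) (hM : #s ≤ M) (ht : 0 ≤ t) (hp : p ≠ 0)
    (h : M * t ≤ ∑ i ∈ s, f i) : M * t ^ p ≤ ∑ i ∈ s, f i ^ p := by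
  obtain ⟨k, rfl⟩ := Nat.exists_eq_succ_of_ne_zero hp
  have hM₀ : 0 ≤ M := (Nat.cast_nonneg _).trans hM
  rcases hM₀.eq_or_lt with rfl | hM₀
  · rw [zero_mul]
    exact sum_nonneg fun i hi ↦ pow_nonneg (hf i hi) _
  refine le_of_mul_le_mul_left ?_ (pow_pos hM₀ k)
  calc M ^ k * (M * t ^ (k + 1)) = (M * t) ^ (k + 1) := by ring
    _ ≤ (∑ i ∈ s, f i) ^ (k + 1) := by gcongr
    _ ≤ (#s : ℝ) ^ k * ∑ i ∈ s, f i ^ (k + 1) := pow_sum_le_card_mul_sum_pow hf k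
    _ ≤ M ^ k * ∑ i ∈ s, f i ^ (k + 1) := by
        gcongr
        exact sum_nonneg fun i hi ↦ pow_nonneg (hf i hi) _

lemma card_mul_card_pow_eq_card_filter_mul_card {β V : Type*} [Fintype β] [Fintype V]
    [DecidableEq V] [DecidableEq β] (x : β) (A : Finset V) :
    #A * Fintype.card V ^ Fintype.card β = #{φ : β → V | φ x ∈ A} * Fintype.card V := by
  have hpi : ({φ : β → V | φ x ∈ A} : Finset (β → V)) =
      Fintype.piFinset fun y ↦ if y = x then A else univ := by
    ext φ
    simp only [mem_filter, mem_univ, true_and, Fintype.mem_piFinset]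
    refine ⟨fun hφ y ↦ ?_, fun hφ ↦ by simpa using hφ x⟩
    split_ifs with hy
    · exact hy ▸ hφ
    · exact mem_univ _
  have hprod : ∏ y ∈ univ.erase x, #(if y = x then A else univ) =
      Fintype.card V ^ (Fintype.card β - 1) := by
    rw [prod_congr rfl fun y hy ↦ by rw [if_neg (ne_of_mem_erase hy)], prod_const, card_univ,
      card_erase_of_mem (mem_univ x), card_univ]
  rw [hpi, Fintype.card_piFinset, ← mul_prod_erase _ _ (mem_univ x), hprod, if_pos rfl, mul_assoc,
    pow_sub_one_mul (Fintype.card_pos_iff.2 ⟨x⟩).ne']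

section FourCycles

variable {U W : Type*} [Fintype U] [Fintype W] [DecidableEq U] [DecidableEq W]

lemma card_sq_le_card_mul_sum_codegree (E : Finset (U × W)) :
    #E ^ 2 ≤ Fintype.card W * ∑ p : U × U, #{w | (p.1, w) ∈ E ∧ (p.2, w) ∈ E} := by
  have hE : #E = ∑ w, #{u | (u, w) ∈ E} := by
    simp only [card_filter, ← Fintype.sum_prod_type_right']
    simp
  have hcodegree : ∑ p : U × U, #{w | (p.1, w) ∈ E ∧ (p.2, w) ∈ E} =
      ∑ w, #{u | (u, w) ∈ E} ^ 2 := by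
    refine (sum_card_bipartiteAbove_eq_sum_card_bipartiteBelow
      fun (p : U × U) w ↦ (p.1, w) ∈ E ∧ (p.2, w) ∈ E).trans (sum_congr rfl fun w _ ↦ ?_)
    rw [sq, ← card_product, ← filter_product, univ_product_univ, bipartiteBelow]
  rw [hE, hcodegree, ← card_univ]
  exact sq_sum_le_card_mul_sum_sq

lemma sum_codegree_sq (E : Finset (U × W)) :
    ∑ p : U × U, #{w | (p.1, w) ∈ E ∧ (p.2, w) ∈ E} ^ 2 =
      #{q ∈ E ×ˢ E | (q.1.1, q.2.2) ∈ E ∧ (q.2.1, q.1.2) ∈ E} := by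
  simp only [sq, ← card_product]
  rw [← card_sigma]
  refine card_nbij' (fun s ↦ ((s.1.1, s.2.1), (s.1.2, s.2.2)))
    (fun q ↦ ⟨(q.1.1, q.2.1), (q.1.2, q.2.2)⟩) ?_ ?_ (fun _ _ ↦ rfl) fun _ _ ↦ rfl
  · rintro ⟨⟨u, u'⟩, w, w'⟩
    simp +contextual
  · rintro ⟨⟨u, w⟩, u', w'⟩
    simp +contextual

lemma card_pow_four_le_card_mul_card_crossing (E : Finset (U × W)) :
    #E ^ 4 ≤ (Fintype.card U * Fintype.card W) ^ 2 *
      #{q ∈ E ×ˢ E | (q.1.1, q.2.2) ∈ E ∧ (q.2.1, q.1.2) ∈ E} := by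
  calc #E ^ 4 = (#E ^ 2) ^ 2 := by ring
    _ ≤ (Fintype.card W * ∑ p : U × U, #{w | (p.1, w) ∈ E ∧ (p.2, w) ∈ E}) ^ 2 := by
        gcongr
        exact card_sq_le_card_mul_sum_codegree E
    _ ≤ Fintype.card W ^ 2 *
          (Fintype.card (U × U) * ∑ p : U × U, #{w | (p.1, w) ∈ E ∧ (p.2, w) ∈ E} ^ 2) := by
        rw [mul_pow, ← card_univ (α := U × U)]
        gcongr
        exact sq_sum_le_card_mul_sum_sq
    _ = _ := by
        rw [sum_codegree_sq, Fintype.card_prod]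
        ring

end FourCycles

section Families

variable {α β V : Type*}

/-- Some member of the family `𝓕` maps `a` to `u` and `b` to `v`: when `ab` is an edge of `F`, this
says that `uv` is one of the edges of colour `ab` in the graph formed by the images of `𝓕`. -/
def Spans (𝓕 : Finset (α → V)) (a b : α) (u v : V) : Prop :=
  ∃ f ∈ 𝓕, f a = u ∧ f b = v

/-- A family of maps out of `F` whose members are determined by the image of any one edge of `F`;
this is all that is needed of a family of edge-disjoint copies of `F`. -/
def EdgeDetermined (F : SimpleGraph α) (𝓕 : Finset (α → V)) : Prop :=
  ∀ ⦃a b⦄, F.Adj a b → Set.InjOn (fun f : α → V ↦ (f a, f b)) 𝓕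

/-- The map `φ` sends every vertex of `S` to a vertex of its own colour, and every edge of `H`
inside `S` to an edge of its own colour, in the graph formed by the images of the family `𝓕`. -/
structure IsCompatible (H : SimpleGraph β) (σ : β → α) (𝓕 : Finset (α → V)) (S : Finset β)
    (φ : β → V) : Prop where
  exists_apply_eq : ∀ x ∈ S, ∃ f ∈ 𝓕, f (σ x) = φ x
  spans : ∀ x ∈ S, ∀ y ∈ S, H.Adj x y → Spans 𝓕 (σ x) (σ y) (φ x) (φ y)

open Classical in
/-- The members `g` of `𝓕` such that for both orientations `cd` of the edge `e`, the vertices `f c`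
and `g d` span an edge of colour `cd`. -/
noncomputable def crossNeighbors (𝓕 : Finset (α → V)) (e : Sym2 α) (f : α → V) :
    Finset (α → V) :=
  {g ∈ 𝓕 | ∀ c d, s(c, d) = e → Spans 𝓕 c d (f c) (g d)}

open Classical in
/-- The members `g` of `𝓕` whose vertices may be joined to `φ` across a cut of colour `e`. -/
noncomputable def cutExtensions (𝓕 : Finset (α → V)) (σ : β → α) (e : Sym2 α) (X : Finset β)
    (φ : β → V) : Finset (α → V) :=
  {g ∈ 𝓕 | ∀ x ∈ X, ∀ d, s(σ x, d) = e → Spans 𝓕 (σ x) d (φ x) (g d)}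

variable {F : SimpleGraph α} {H : SimpleGraph β} {σ : β → α} {𝓕 𝓖 : Finset (α → V)} {a b : α}
  {u v : V} {e : Sym2 α} {S X Y : Finset β} {φ ψ : β → V}

lemma Spans.mono (h : Spans 𝓕 a b u v) (h𝓕 : 𝓕 ⊆ 𝓖) : Spans 𝓖 a b u v :=
  let ⟨f, hf, hfuv⟩ := h
  ⟨f, h𝓕 hf, hfuv⟩

lemma Spans.symm (h : Spans 𝓕 a b u v) : Spans 𝓕 b a v u :=
  let ⟨f, hf, hfu, hfv⟩ := h
  ⟨f, hf, hfv, hfu⟩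

lemma spans_iff_mem_image [DecidableEq V] :
    Spans 𝓕 a b u v ↔ (u, v) ∈ 𝓕.image fun f ↦ (f a, f b) := by
  simp only [Spans, mem_image, Prod.mk.injEq]

lemma EdgeDetermined.mono (h : EdgeDetermined F 𝓖) (h𝓕 : 𝓕 ⊆ 𝓖) : EdgeDetermined F 𝓕 :=
  fun _ _ hab ↦ (h hab).mono (coe_subset.2 h𝓕)

lemma IsCompatible.mono (h : IsCompatible H σ 𝓕 S φ) (h𝓕 : 𝓕 ⊆ 𝓖) : IsCompatible H σ 𝓖 S φ where
  exists_apply_eq x hx :=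
    let ⟨f, hf, hfx⟩ := h.exists_apply_eq x hx
    ⟨f, h𝓕 hf, hfx⟩
  spans x hx y hy hxy := (h.spans x hx y hy hxy).mono h𝓕

lemma IsCompatible.congr (h : IsCompatible H σ 𝓕 S φ) (hφψ : ∀ x ∈ S, φ x = ψ x) :
    IsCompatible H σ 𝓕 S ψ where
  exists_apply_eq x hx := hφψ x hx ▸ h.exists_apply_eq x hx
  spans x hx y hy hxy := hφψ x hx ▸ hφψ y hy ▸ h.spans x hx y hy hxy

lemma crossNeighbors_subset (f : α → V) : crossNeighbors 𝓕 e f ⊆ 𝓕 := by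
  classical exact filter_subset _ _

lemma cutExtensions_subset : cutExtensions 𝓕 σ e X φ ⊆ 𝓕 := by
  classical exact filter_subset _ _

lemma mem_crossNeighbors {f g : α → V} : g ∈ crossNeighbors 𝓕 e f ↔
    g ∈ 𝓕 ∧ ∀ c d, s(c, d) = e → Spans 𝓕 c d (f c) (g d) := by
  classical exact mem_filter

lemma mem_cutExtensions {g : α → V} : g ∈ cutExtensions 𝓕 σ e X φ ↔
    g ∈ 𝓕 ∧ ∀ x ∈ X, ∀ d, s(σ x, d) = e → Spans 𝓕 (σ x) d (φ x) (g d) := by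
  classical exact mem_filter

lemma IsCompatible.mem_cutExtensions {f : α → V} (hf : f ∈ 𝓕)
    (hφ : IsCompatible H σ (crossNeighbors 𝓕 e f) X φ) : f ∈ cutExtensions 𝓕 σ e X φ := by
  refine _root_.mem_cutExtensions.2 ⟨hf, fun x hx d hd ↦ ?_⟩
  obtain ⟨g, hg, hgx⟩ := hφ.exists_apply_eq x hx
  exact hgx ▸ ((mem_crossNeighbors.1 hg).2 d (σ x) (Sym2.eq_swap.trans hd)).symm

lemma IsCompatible.union (hφX : IsCompatible H σ 𝓕 X φ) (hφY : IsCompatible H σ 𝓕 Y φ)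
    (hcross : ∀ x ∈ X, ∀ y ∈ Y, H.Adj x y → Spans 𝓕 (σ x) (σ y) (φ x) (φ y)) [DecidableEq β] :
    IsCompatible H σ 𝓕 (X ∪ Y) φ where
  exists_apply_eq x hx := (mem_union.1 hx).elim (hφX.exists_apply_eq x) (hφY.exists_apply_eq x)
  spans x hx y hy hxy := by
    rcases mem_union.1 hx with hx | hx <;> rcases mem_union.1 hy with hy | hy
    · exact hφX.spans x hx y hy hxy
    · exact hcross x hx y hy hxy
    · exact (hcross y hy x hx hxy.symm).symm
    · exact hφY.spans x hx y hy hxy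

lemma IsCompatible.piecewise [DecidableEq β] (hXY : Disjoint X Y)
    (hcut : ∀ x ∈ X, ∀ y ∈ Y, H.Adj x y → s(σ x, σ y) = e) (hφ : IsCompatible H σ 𝓕 X φ)
    (hψ : IsCompatible H σ (cutExtensions 𝓕 σ e X φ) Y ψ) :
    IsCompatible H σ 𝓕 (X ∪ Y) (X.piecewise φ ψ) := by
  have hX : ∀ x ∈ X, φ x = X.piecewise φ ψ x := fun x hx ↦ (piecewise_eq_of_mem _ _ _ hx).symm
  have hY : ∀ y ∈ Y, ψ y = X.piecewise φ ψ y := fun y hy ↦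
    (piecewise_eq_of_notMem _ _ _ (disjoint_right.1 hXY hy)).symm
  refine (hφ.congr hX).union ((hψ.mono cutExtensions_subset).congr hY) fun x hx y hy hxy ↦ ?_
  obtain ⟨g, hg, hgy⟩ := hψ.exists_apply_eq y hy
  rw [← hX x hx, ← hY y hy, ← hgy]
  exact (_root_.mem_cutExtensions.1 hg).2 x hx (σ y) (hcut x hx y hy hxy)

end Families

section Counting

variable {α β V : Type*} [Fintype β] [Fintype V] {F : SimpleGraph α} {H : SimpleGraph β}
  {σ : β → α} {𝓕 : Finset (α → V)} {e : Sym2 α} {S X Y : Finset β}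

open Classical in
/-- The finset of all `IsCompatible` maps. Their values outside `S` are arbitrary, so the counts for
different `S` are all normalised by the number of maps `β → V`. -/
noncomputable def compatibleMaps (H : SimpleGraph β) (σ : β → α) (𝓕 : Finset (α → V))
    (S : Finset β) : Finset (β → V) :=
  {φ | IsCompatible H σ 𝓕 S φ}

lemma mem_compatibleMaps {φ : β → V} :
    φ ∈ compatibleMaps H σ 𝓕 S ↔ IsCompatible H σ 𝓕 S φ := by
  classical simp only [compatibleMaps, mem_filter, mem_univ, true_and]

lemma sum_card_compatibleMaps_crossNeighbors_le :
    ∑ f ∈ 𝓕, #(compatibleMaps H σ (crossNeighbors 𝓕 e f) X) ≤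
      ∑ φ ∈ compatibleMaps H σ 𝓕 X, #(cutExtensions 𝓕 σ e X φ) := by
  classical
  let r : (α → V) → (β → V) → Prop := fun f φ ↦ IsCompatible H σ (crossNeighbors 𝓕 e f) X φ
  calc ∑ f ∈ 𝓕, #(compatibleMaps H σ (crossNeighbors 𝓕 e f) X)
      ≤ ∑ f ∈ 𝓕, #((compatibleMaps H σ 𝓕 X).bipartiteAbove r f) := by
        refine sum_le_sum fun f _ ↦ card_le_card fun φ hφ ↦ ?_
        have hφ := mem_compatibleMaps.1 hφ
        exact (mem_bipartiteAbove r).2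
          ⟨mem_compatibleMaps.2 (hφ.mono (crossNeighbors_subset f)), hφ⟩
    _ = ∑ φ ∈ compatibleMaps H σ 𝓕 X, #(𝓕.bipartiteBelow r φ) :=
        sum_card_bipartiteAbove_eq_sum_card_bipartiteBelow r
    _ ≤ _ := by
        refine sum_le_sum fun φ _ ↦ card_le_card fun f hf ↦ ?_
        obtain ⟨hf, hφ⟩ := (mem_bipartiteBelow r).1 hf
        exact hφ.mem_cutExtensions hf

/- Exchanging the values of `φ` and `ψ` outside `X` turns a pair of maps compatible on `X` and on
`Y` into a map compatible on `X ∪ Y`, together with an arbitrary map. -/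
lemma sum_card_compatibleMaps_cutExtensions_le [DecidableEq β] (hXY : Disjoint X Y)
    (hcut : ∀ x ∈ X, ∀ y ∈ Y, H.Adj x y → s(σ x, σ y) = e) :
    ∑ φ ∈ compatibleMaps H σ 𝓕 X, #(compatibleMaps H σ (cutExtensions 𝓕 σ e X φ) Y) ≤
      #(compatibleMaps H σ 𝓕 (X ∪ Y)) * Fintype.card V ^ Fintype.card β := by
  rw [← card_sigma, ← Fintype.card_fun, ← card_univ, ← card_product]
  refine card_le_card_of_injOn (fun s ↦ (X.piecewise s.1 s.2, X.piecewise s.2 s.1)) ?_ ?_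
  · rintro ⟨φ, ψ⟩ hφψ
    obtain ⟨hφ, hψ⟩ := mem_sigma.1 hφψ
    exact mem_product.2 ⟨mem_compatibleMaps.2 <|
      (mem_compatibleMaps.1 hφ).piecewise hXY hcut (mem_compatibleMaps.1 hψ), mem_univ _⟩
  · rintro ⟨φ, ψ⟩ _ ⟨φ', ψ'⟩ _ h
    obtain ⟨h₁, h₂⟩ := Prod.mk.inj h
    have heq : ∀ x, φ x = φ' x ∧ ψ x = ψ' x := fun x ↦ by
      have h₁ := congrFun h₁ x
      have h₂ := congrFun h₂ x
      by_cases hx : x ∈ X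
      · simpa [hx] using And.intro h₁ h₂
      · simpa [hx] using And.intro h₂ h₁
    obtain rfl : φ = φ' := funext fun x ↦ (heq x).1
    obtain rfl : ψ = ψ' := funext fun x ↦ (heq x).2
    rfl

end Counting

section Density

variable {α β V : Type*} [Fintype V] {F : SimpleGraph α} {H : SimpleGraph β}
  {σ : β → α} {𝓕 : Finset (α → V)} {e : Sym2 α}

/-- The size of a family of maps `α → V` relative to the number of pairs of vertices; for an
`EdgeDetermined` family it is at most `1`. -/
noncomputable def familyDensity (𝓕 : Finset (α → V)) : ℝ :=
  #𝓕 / (Fintype.card V : ℝ) ^ 2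

lemma familyDensity_nonneg : 0 ≤ familyDensity 𝓕 := by
  unfold familyDensity
  positivity

lemma EdgeDetermined.card_le_card_image_mul_card [DecidableEq V] (h𝓕 : EdgeDetermined F 𝓕) {a : α}
    (ha : a ∈ F.support) : #𝓕 ≤ #(𝓕.image (· a)) * Fintype.card V := by
  obtain ⟨b, hab⟩ := ha
  rw [← card_univ, ← card_product]
  exact card_le_card_of_injOn _
    (fun f hf ↦ mem_product.2 ⟨mem_image_of_mem (· a) hf, mem_univ _⟩) (h𝓕 hab)

lemma EdgeDetermined.familyDensity_le_one (h𝓕 : EdgeDetermined F 𝓕) (hF : F ≠ ⊥) :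
    familyDensity 𝓕 ≤ 1 := by
  classical
  obtain ⟨a, b, hab⟩ := SimpleGraph.ne_bot_iff_exists_adj.1 hF
  have hcard : #𝓕 ≤ Fintype.card V ^ 2 := by
    rw [sq]
    exact (h𝓕.card_le_card_image_mul_card ⟨b, hab⟩).trans (Nat.mul_le_mul_right _ (card_le_univ _))
  exact div_le_one_of_le₀ (mod_cast hcard) (by positivity)

lemma EdgeDetermined.card_pow_four_le (h𝓕 : EdgeDetermined F 𝓕) (he : e ∈ F.edgeSet) :
    #𝓕 ^ 4 ≤ Fintype.card V ^ 4 * ∑ f ∈ 𝓕, #(crossNeighbors 𝓕 e f) := by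
  classical
  induction e using Sym2.ind with | _ a b =>
  let π : (α → V) → V × V := fun f ↦ (f a, f b)
  let E : Finset (V × V) := 𝓕.image π
  have hcross : #{q ∈ E ×ˢ E | (q.1.1, q.2.2) ∈ E ∧ (q.2.1, q.1.2) ∈ E} ≤
      ∑ f ∈ 𝓕, #(crossNeighbors 𝓕 s(a, b) f) := by
    rw [← card_sigma]
    refine card_le_card_of_surjOn (fun s ↦ (π s.1, π s.2)) fun q hq ↦ ?_
    obtain ⟨hq, hfg, hgf⟩ := mem_filter.1 hq
    obtain ⟨⟨f, hf, hfq⟩, g, hg, hgq⟩ := (mem_product.1 hq).imp mem_image.1 mem_image.1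
    rw [← hfq, ← hgq, ← spans_iff_mem_image] at hfg hgf
    refine ⟨⟨f, g⟩, mem_sigma.2 ⟨hf, mem_crossNeighbors.2 ⟨hg, fun c d hcd ↦ ?_⟩⟩,
      Prod.ext hfq hgq⟩
    rcases Sym2.eq_iff.1 hcd with ⟨rfl, rfl⟩ | ⟨rfl, rfl⟩
    · exact hfg
    · exact hgf.symm
  calc #𝓕 ^ 4 = #E ^ 4 := by rw [card_image_of_injOn (h𝓕 he)]
    _ ≤ _ := card_pow_four_le_card_mul_card_crossing E
    _ ≤ _ := by
        rw [← sq, ← pow_mul]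
        gcongr

lemma EdgeDetermined.card_mul_familyDensity_pow_le (h𝓕 : EdgeDetermined F 𝓕)
    (he : e ∈ F.edgeSet) {p : ℕ} (hp : p ≠ 0) :
    #𝓕 * (familyDensity 𝓕 ^ 3) ^ p ≤ ∑ f ∈ 𝓕, familyDensity (crossNeighbors 𝓕 e f) ^ p := by
  refine mul_pow_le_sum_pow (fun _ _ ↦ familyDensity_nonneg) le_rfl
    (pow_nonneg familyDensity_nonneg 3) hp ?_
  have hcard : (#𝓕 : ℝ) ^ 4 ≤
      (∑ f ∈ 𝓕, (#(crossNeighbors 𝓕 e f) : ℝ)) * (Fintype.card V : ℝ) ^ 4 := by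
    rw [mul_comm]
    exact mod_cast h𝓕.card_pow_four_le he
  unfold familyDensity
  calc #𝓕 * ((#𝓕 : ℝ) / (Fintype.card V : ℝ) ^ 2) ^ 3
      = (#𝓕 : ℝ) ^ 4 / (Fintype.card V : ℝ) ^ 4 / (Fintype.card V : ℝ) ^ 2 := by ring
    _ ≤ (∑ f ∈ 𝓕, (#(crossNeighbors 𝓕 e f) : ℝ)) / (Fintype.card V : ℝ) ^ 2 := by
        gcongr
        exact div_le_of_le_mul₀ (by positivity) (by positivity) hcard
    _ = _ := sum_div ..

end Density

section CompatibleProportion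

variable {α β V : Type*} [Fintype β] [Fintype V] {F : SimpleGraph α} {H : SimpleGraph β}
  {σ : β → α} {𝓕 : Finset (α → V)} {e : Sym2 α} {S X Y : Finset β} {p q : ℕ}

/-- The bound that is proved by induction on `S`: for every family of density `δ` of maps `α → V`,
the maps compatible on `S` make up a proportion at least `δ ^ p` of all maps `β → V`. -/
def CompatibleProportionBound (F : SimpleGraph α) (H : SimpleGraph β) (σ : β → α) (V : Type*)
    [Fintype V] (S : Finset β) (p : ℕ) : Prop :=
  ∀ 𝓕 : Finset (α → V), EdgeDetermined F 𝓕 →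
    (Fintype.card V : ℝ) ^ Fintype.card β * familyDensity 𝓕 ^ p ≤ #(compatibleMaps H σ 𝓕 S)

lemma compatibleProportionBound_empty (hF : F ≠ ⊥) : CompatibleProportionBound F H σ V ∅ p := by
  intro 𝓕 h𝓕
  classical
  have huniv : compatibleMaps H σ 𝓕 ∅ = univ := eq_univ_of_forall fun φ ↦
    mem_compatibleMaps.2 ⟨by simp only [notMem_empty, false_imp_iff, implies_true],
      by simp only [notMem_empty, false_imp_iff, implies_true]⟩
  rw [huniv, card_univ, Fintype.card_fun, Nat.cast_pow]
  exact mul_le_of_le_one_right (by positivity)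
    (pow_le_one₀ familyDensity_nonneg (h𝓕.familyDensity_le_one hF))

lemma compatibleProportionBound_singleton {x : β} (hx : σ x ∈ F.support) :
    CompatibleProportionBound F H σ V {x} 1 := by
  classical
  intro 𝓕 h𝓕
  let A : Finset V := 𝓕.image (· (σ x))
  have hsub : ({φ : β → V | φ x ∈ A} : Finset (β → V)) ⊆ compatibleMaps H σ 𝓕 {x} := by
    intro φ hφ
    refine mem_compatibleMaps.2 ⟨fun y hy ↦ ?_, fun y hy z hz hyz ↦ ?_⟩
    · obtain rfl := mem_singleton.1 hy
      exact mem_image.1 (mem_filter.1 hφ).2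
    · obtain rfl := mem_singleton.1 hy
      exact absurd (mem_singleton.1 hz).symm hyz.ne
  have hcard : Fintype.card V ^ Fintype.card β * #𝓕 ≤
      #(compatibleMaps H σ 𝓕 {x}) * Fintype.card V ^ 2 :=
    calc Fintype.card V ^ Fintype.card β * #𝓕
        ≤ Fintype.card V ^ Fintype.card β * (#A * Fintype.card V) := by
          gcongr
          exact h𝓕.card_le_card_image_mul_card hx
      _ = #{φ : β → V | φ x ∈ A} * Fintype.card V ^ 2 := by
          rw [← mul_assoc, mul_comm _ #A, card_mul_card_pow_eq_card_filter_mul_card x A, sq,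
            mul_assoc]
      _ ≤ _ := by gcongr
  rw [pow_one, familyDensity, ← mul_div_assoc]
  exact div_le_of_le_mul₀ (by positivity) (by positivity) (mod_cast hcard)

lemma CompatibleProportionBound.le_sum_familyDensity_cutExtensions
    (hX : CompatibleProportionBound F H σ V X p) (hp : p ≠ 0) (h𝓕 : EdgeDetermined F 𝓕)
    (he : e ∈ F.edgeSet) :
    (Fintype.card V : ℝ) ^ Fintype.card β * familyDensity 𝓕 ^ (3 * p + 1) ≤
      ∑ φ ∈ compatibleMaps H σ 𝓕 X, familyDensity (cutExtensions 𝓕 σ e X φ) := by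
  set n : ℝ := (Fintype.card V : ℝ)
  calc n ^ Fintype.card β * familyDensity 𝓕 ^ (3 * p + 1)
      = n ^ Fintype.card β * (#𝓕 * (familyDensity 𝓕 ^ 3) ^ p) / n ^ 2 := by
        rw [pow_succ, pow_mul]
        nth_rewrite 2 [familyDensity]
        ring
    _ ≤ n ^ Fintype.card β * (∑ f ∈ 𝓕, familyDensity (crossNeighbors 𝓕 e f) ^ p) / n ^ 2 := by
        gcongr
        exact h𝓕.card_mul_familyDensity_pow_le he hp
    _ ≤ (∑ f ∈ 𝓕, (#(compatibleMaps H σ (crossNeighbors 𝓕 e f) X) : ℝ)) / n ^ 2 := by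
        rw [mul_sum]
        gcongr with f
        exact hX _ (h𝓕.mono (crossNeighbors_subset f))
    _ ≤ (∑ φ ∈ compatibleMaps H σ 𝓕 X, (#(cutExtensions 𝓕 σ e X φ) : ℝ)) / n ^ 2 := by
        gcongr
        exact mod_cast sum_card_compatibleMaps_crossNeighbors_le
    _ = _ := sum_div ..

lemma CompatibleProportionBound.union [Nonempty V] [DecidableEq β]
    (hX : CompatibleProportionBound F H σ V X p) (hY : CompatibleProportionBound F H σ V Y q)
    (hp : p ≠ 0) (hq : q ≠ 0) (he : e ∈ F.edgeSet) (hXY : Disjoint X Y)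
    (hcut : ∀ x ∈ X, ∀ y ∈ Y, H.Adj x y → s(σ x, σ y) = e) :
    CompatibleProportionBound F H σ V (X ∪ Y) ((3 * p + 1) * q) := by
  intro 𝓕 h𝓕
  set M : ℝ := (Fintype.card V : ℝ) ^ Fintype.card β with hM
  have hM₀ : 0 < M := by positivity
  have hcard : (#(compatibleMaps H σ 𝓕 X) : ℝ) ≤ M := by
    rw [hM, ← Nat.cast_pow, ← Fintype.card_fun]
    exact mod_cast card_le_univ _
  refine le_of_mul_le_mul_left ?_ hM₀
  calc M * (M * familyDensity 𝓕 ^ ((3 * p + 1) * q))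
      = M * (M * (familyDensity 𝓕 ^ (3 * p + 1)) ^ q) := by rw [pow_mul]
    _ ≤ M * ∑ φ ∈ compatibleMaps H σ 𝓕 X, familyDensity (cutExtensions 𝓕 σ e X φ) ^ q := by
        gcongr
        exact mul_pow_le_sum_pow (fun _ _ ↦ familyDensity_nonneg) hcard
          (pow_nonneg familyDensity_nonneg _) hq
          (hX.le_sum_familyDensity_cutExtensions hp h𝓕 he)
    _ ≤ ∑ φ ∈ compatibleMaps H σ 𝓕 X,
          (#(compatibleMaps H σ (cutExtensions 𝓕 σ e X φ) Y) : ℝ) := by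
        rw [mul_sum]
        gcongr
        exact hY _ (h𝓕.mono cutExtensions_subset)
    _ ≤ #(compatibleMaps H σ 𝓕 (X ∪ Y)) * M := by
        rw [hM]
        exact mod_cast sum_card_compatibleMaps_cutExtensions_le hXY hcut
    _ = _ := mul_comm ..

end CompatibleProportion

section Cuts

variable {α β : Type*} {F : SimpleGraph α} {H : SimpleGraph β} {σ τ : β → α} {S : Finset β}

/-- The set `S` has a partition into two nonempty parts such that all the edges of `H` between them
have the same colour, where the colour of `xy` is the edge `s(σ x, σ y)` of `F`. The colour is
required to be an edge of `F` even if no edge of `H` crosses the partition. -/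
def HasUnicolouredCut (F : SimpleGraph α) (H : SimpleGraph β) (σ : β → α) (S : Finset β) : Prop :=
  ∃ e ∈ F.edgeSet, ∃ X Y : Finset β, X.Nonempty ∧ Y.Nonempty ∧ Disjoint X Y ∧
    (X : Set β) ∪ Y = S ∧ ∀ x ∈ X, ∀ y ∈ Y, H.Adj x y → s(σ x, σ y) = e

lemma HasUnicolouredCut.congr (h : HasUnicolouredCut F H σ S)
    (hστ : ∀ x ∈ H.support, σ x = τ x) : HasUnicolouredCut F H τ S := by
  obtain ⟨e, he, X, Y, hX, hY, hXY, hS, hcut⟩ := h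
  refine ⟨e, he, X, Y, hX, hY, hXY, hS, fun x hx y hy hxy ↦ ?_⟩
  rw [← hστ x ⟨y, hxy⟩, ← hστ y ⟨x, hxy.symm⟩, hcut x hx y hy hxy]

lemma hasUnicolouredCut_of_forall_not_adj (hF : F ≠ ⊥) (hS : S.Nontrivial)
    (h : ∀ x ∈ S, ∀ y ∈ S, ¬ H.Adj x y) : HasUnicolouredCut F H σ S := by
  classical
  obtain ⟨e, he⟩ := SimpleGraph.edgeSet_nonempty.2 hF
  obtain ⟨x, hx⟩ := hS.nonempty
  refine ⟨e, he, {x}, S.erase x, singleton_nonempty x, (erase_nonempty hx).2 hS,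
    disjoint_singleton_left.2 (notMem_erase x S), ?_, fun y hy z hz hyz ↦ ?_⟩
  · rw [← coe_union, ← insert_eq, insert_erase hx]
  · obtain rfl := mem_singleton.1 hy
    exact absurd hyz (h _ hx z (mem_of_mem_erase hz))

lemma hasUnicolouredCut_of_coe_eq_union {σ : H →g F} (hF : F ≠ ⊥) {c : Sym2 α}
    {X Y : Set β} (hX : X.Nonempty) (hY : Y.Nonempty) (hXY : Disjoint X Y) (hS : X ∪ Y = S)
    (hcut : ∀ x ∈ X, ∀ y ∈ Y, H.Adj x y → s(σ x, σ y) = c) : HasUnicolouredCut F H σ S := by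
  lift X to Finset β using S.finite_toSet.subset (hS ▸ Set.subset_union_left)
  lift Y to Finset β using S.finite_toSet.subset (hS ▸ Set.subset_union_right)
  rw [disjoint_coe] at hXY
  by_cases hc : c ∈ F.edgeSet
  · exact ⟨c, hc, X, Y, hX, hY, hXY, hS, hcut⟩
  · obtain ⟨e, he⟩ := SimpleGraph.edgeSet_nonempty.2 hF
    refine ⟨e, he, X, Y, hX, hY, hXY, hS, fun x hx y hy hxy ↦ absurd ?_ hc⟩
    exact hcut x hx y hy hxy ▸ σ.map_adj hxy

lemma Splittable.exists_hom_forall_hasUnicolouredCut (h : Splittable F H)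
    (hF : F ≠ ⊥) :
    ∃ σ : H →g F, ∀ S : Finset β, S.Nontrivial → HasUnicolouredCut F H σ S := by
  obtain ⟨σ, hσ⟩ := h
  refine ⟨σ, fun S hS ↦ ?_⟩
  by_cases hadj : ∀ x ∈ S, ∀ y ∈ S, ¬ H.Adj x y
  · exact hasUnicolouredCut_of_forall_not_adj hF hS hadj
  push Not at hadj
  obtain ⟨x, hx, y, hy, hxy⟩ := hadj
  obtain ⟨a, b, X, Y, hX, hY, hXY, hunion, hcut⟩ :=
    hσ ((⊤ : H.Subgraph).induce S) ⟨s(x, y), hx, hy, hxy⟩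
  refine hasUnicolouredCut_of_coe_eq_union hF (c := s(a, b)) hX hY hXY hunion
    fun x hx y hy hxy ↦ Sym2.eq_iff.2 <| hcut x y ⟨?_, ?_, hxy⟩ hx hy
  · exact hunion.subset (Or.inl hx)
  · exact hunion.subset (Or.inr hy)

lemma exists_hom_forall_mem_support (hF : F ≠ ⊥) (σ : H →g F) :
    ∃ τ : H →g F, (∀ x, τ x ∈ F.support) ∧ ∀ x ∈ H.support, σ x = τ x := by
  classical
  obtain ⟨a, b, hab⟩ := SimpleGraph.ne_bot_iff_exists_adj.1 hF
  have hτ : ∀ x ∈ H.support, σ x = if x ∈ H.support then σ x else a := fun x hx ↦ (if_pos hx).symm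
  refine ⟨⟨fun x ↦ if x ∈ H.support then σ x else a, fun {x y} hxy ↦ ?_⟩, fun x ↦ ?_, hτ⟩
  · rw [← hτ x ⟨y, hxy⟩, ← hτ y ⟨x, hxy.symm⟩]
    exact σ.map_adj hxy
  · change (if x ∈ H.support then σ x else a) ∈ F.support
    split_ifs with hx
    · obtain ⟨y, hxy⟩ := hx
      exact ⟨σ y, σ.map_adj hxy⟩
    · exact ⟨b, hab⟩

lemma exists_compatibleProportionBound [Fintype β] (hF : F ≠ ⊥)
    (hσ : ∀ x, σ x ∈ F.support) (hcut : ∀ S : Finset β, S.Nontrivial → HasUnicolouredCut F H σ S)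
    (S : Finset β) :
    ∃ p ≠ 0, ∀ (V : Type*) [Fintype V] [Nonempty V], CompatibleProportionBound F H σ V S p := by
  classical
  induction S using Finset.strongInduction with | H S ih =>
  rcases S.eq_empty_or_nonempty with rfl | hS
  · exact ⟨1, one_ne_zero, fun V _ _ ↦ compatibleProportionBound_empty hF⟩
  rcases hS.exists_eq_singleton_or_nontrivial with ⟨x, rfl⟩ | hS
  · exact ⟨1, one_ne_zero, fun V _ _ ↦ compatibleProportionBound_singleton (hσ x)⟩
  obtain ⟨e, he, X, Y, hX, hY, hXY, hunion, hedge⟩ := hcut S hS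
  obtain rfl : X ∪ Y = S := by rwa [← coe_inj, coe_union]
  obtain ⟨p, hp, hXp⟩ := ih X (left_lt_sup.2 fun h ↦ hY.ne_empty (hXY.symm.eq_bot_of_le h))
  obtain ⟨q, hq, hYq⟩ := ih Y (right_lt_sup.2 fun h ↦ hX.ne_empty (hXY.eq_bot_of_le h))
  exact ⟨(3 * p + 1) * q, mul_ne_zero (Nat.succ_ne_zero _) hq, fun V _ _ ↦
    (hXp V).union (hYq V) hp hq he hXY hedge⟩

end Cuts

section Packing

variable {α V : Type*} {F : SimpleGraph α} {G : SimpleGraph V} {𝓕 : Finset (α → V)}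

lemma edgeDetermined_of_pairwiseDisjoint
    (h𝓕 : (𝓕 : Set (α → V)).PairwiseDisjoint fun f ↦ Sym2.map f '' F.edgeSet) :
    EdgeDetermined F 𝓕 := fun a b hab f hf g hg hfg ↦ by
  refine h𝓕.elim_set hf hg s(f a, f b) ⟨s(a, b), hab, rfl⟩ ⟨s(a, b), hab, ?_⟩
  rw [Sym2.map_mk, (Prod.mk.inj hfg).1, (Prod.mk.inj hfg).2]

lemma exists_le_comap_forall_disjoint [Finite α] [Finite V] {t : ℝ}
    (hG : ∀ G' ≤ G, ((G.edgeSet \ G'.edgeSet).ncard : ℝ) < t → Nonempty (F →g G'))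
    (h𝓕 : F.edgeSet.ncard * #𝓕 < t) :
    ∃ g : α → V, F ≤ G.comap g ∧
      ∀ f ∈ 𝓕, Disjoint (Sym2.map g '' F.edgeSet) (Sym2.map f '' F.edgeSet) := by
  let D : Set (Sym2 V) := ⋃ f ∈ 𝓕, Sym2.map f '' F.edgeSet
  have hD : D.ncard ≤ F.edgeSet.ncard * #𝓕 := by
    rw [mul_comm]
    refine (set_ncard_biUnion_le 𝓕 _).trans (sum_le_card_nsmul _ _ _ fun f _ ↦ ?_)
    exact Set.ncard_image_le
  have hdel : (G.edgeSet \ (G.deleteEdges D).edgeSet).ncard ≤ D.ncard := by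
    refine Set.ncard_le_ncard ?_
    rw [SimpleGraph.edgeSet_deleteEdges, Set.sdiff_sdiff_right_self]
    exact Set.inter_subset_right
  obtain ⟨g⟩ := hG (G.deleteEdges D) (G.deleteEdges_le D)
    (lt_of_le_of_lt (mod_cast hdel.trans hD) h𝓕)
  have hgD : ∀ e ∈ F.edgeSet, Sym2.map g e ∉ D := by
    refine Sym2.ind fun a b hab ↦ ?_
    exact ((SimpleGraph.deleteEdges_adj ..).1 (g.map_adj hab)).2
  refine ⟨g, fun a b hab ↦ (G.deleteEdges_le D) (g.map_adj hab), fun f hf ↦ ?_⟩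
  exact Set.disjoint_left.2 <| Set.forall_mem_image.2 fun e he hef ↦
    hgD e he (Set.mem_biUnion hf hef)

lemma exists_pairwiseDisjoint_le_ncard_mul_card [Finite α] [Finite V] (hF : F ≠ ⊥) {t : ℝ}
    (hG : ∀ G' ≤ G, ((G.edgeSet \ G'.edgeSet).ncard : ℝ) < t → Nonempty (F →g G')) :
    ∃ 𝓕 : Finset (α → V), (𝓕 : Set (α → V)).PairwiseDisjoint (fun f ↦ Sym2.map f '' F.edgeSet) ∧
      (∀ f ∈ 𝓕, F ≤ G.comap f) ∧ t ≤ F.edgeSet.ncard * #𝓕 := by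
  classical
  let P : Finset (α → V) → Prop := fun 𝓕 ↦
    (𝓕 : Set (α → V)).PairwiseDisjoint (fun f ↦ Sym2.map f '' F.edgeSet) ∧
      ∀ f ∈ 𝓕, F ≤ G.comap f
  obtain ⟨𝓕, ⟨hdisj, hhom⟩, hmax⟩ := (Set.toFinite {𝓕 | P 𝓕}).exists_maximal ⟨∅, by simp [P]⟩
  refine ⟨𝓕, hdisj, hhom, ?_⟩
  by_contra! hlt
  obtain ⟨g, hgG, hg⟩ := exists_le_comap_forall_disjoint hG hlt
  have hinsert : P (insert g 𝓕) := by
    refine ⟨?_, forall_mem_insert _ _ _ |>.2 ⟨hgG, hhom⟩⟩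
    rw [coe_insert]
    exact hdisj.insert fun f hf _ ↦ hg f hf
  have hg𝓕 : g ∈ 𝓕 := hmax hinsert (subset_insert _ _) (mem_insert_self _ _)
  exact ((SimpleGraph.edgeSet_nonempty.2 hF).image _).ne_empty (disjoint_self.1 (hg g hg𝓕))

lemma FarFromFree.exists_edgeDetermined [Finite α] [Fintype V] [Nonempty V] {ε : ℝ}
    (hG : FarFromFree F G ε) (hF : F ≠ ⊥) :
    ∃ 𝓕 : Finset (α → V), EdgeDetermined F 𝓕 ∧ (∀ f ∈ 𝓕, F ≤ G.comap f) ∧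
      ε ≤ F.edgeSet.ncard * familyDensity 𝓕 := by
  obtain ⟨𝓕, hdisj, hhom, hcard⟩ := exists_pairwiseDisjoint_le_ncard_mul_card hF
    fun G' hG' hlt ↦ (hG G' hG' hlt).nonempty
  refine ⟨𝓕, edgeDetermined_of_pairwiseDisjoint hdisj, hhom, ?_⟩
  rw [familyDensity, ← mul_div_assoc, le_div_iff₀ (by positivity), ← Nat.card_eq_fintype_card]
  exact hcard

end Packing

section HomCount

variable {α β V : Type*} [Fintype β] [Fintype V] {F : SimpleGraph α} {H : SimpleGraph β}
  {G : SimpleGraph V} {𝓕 : Finset (α → V)}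

lemma card_compatibleMaps_univ_le_natCard_hom (σ : H →g F) (h𝓕 : ∀ f ∈ 𝓕, F ≤ G.comap f) :
    #(compatibleMaps H σ 𝓕 univ) ≤ Nat.card (H →g G) := by
  rw [← Nat.card_eq_finsetCard]
  refine Nat.card_le_card_of_injective (fun φ ↦ ⟨φ.1, fun {x y} hxy ↦ ?_⟩) fun φ ψ h ↦
    Subtype.ext (congrArg DFunLike.coe h)
  obtain ⟨f, hf, hfx, hfy⟩ :=
    (mem_compatibleMaps.1 φ.2).spans x (mem_univ x) y (mem_univ y) hxy
  rw [← hfx, ← hfy]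
  exact h𝓕 f hf (σ.map_adj hxy)

end HomCount

section CopyCount

variable {β V : Type*} {H : SimpleGraph β} {G : SimpleGraph V}

lemma natCard_copy_le_copyCount_mul_natCard_iso [Finite β] [Finite V] :
    Nat.card (H.Copy G) ≤ copyCount H G * Nat.card (H ≃g H) := by
  have : Finite (H ≃g H) := DFunLike.finite _
  let compIso : {K : G.Subgraph // Nonempty (H ≃g K.coe)} × (H ≃g H) → H.Copy G :=
    fun q ↦ q.1.1.coeCopy.comp (q.1.2.some.toCopy.comp q.2.toCopy)
  have hsurj : Function.Surjective compIso := fun f ↦ by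
    let K : {K : G.Subgraph // Nonempty (H ≃g K.coe)} := ⟨f.toSubgraph, ⟨f.isoToSubgraph⟩⟩
    refine ⟨(K, RelIso.trans f.isoToSubgraph (RelIso.symm K.2.some)), ?_⟩
    ext x
    exact congrArg Subtype.val (K.2.some.apply_symm_apply (f.isoToSubgraph x))
  calc Nat.card (H.Copy G) ≤ _ := Nat.card_le_card_of_surjective _ hsurj
    _ = _ := Nat.card_prod ..

lemma natCard_hom_add_descFactorial_le [Fintype β] [Fintype V] :
    Nat.card (H →g G) + (Fintype.card V).descFactorial (Fintype.card β) ≤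
      Nat.card (H.Copy G) + Fintype.card V ^ Fintype.card β := by
  classical
  have : Finite (H.Copy G) := DFunLike.finite _
  let A : Set (β → V) := Set.range (DFunLike.coe : (H →g G) → β → V)
  let B : Set (β → V) := {φ | Function.Injective φ}
  have hA : A.ncard = Nat.card (H →g G) := by
    rw [← Nat.card_coe_set_eq]
    exact Nat.card_range_of_injective DFunLike.coe_injective
  have hB : B.ncard = (Fintype.card V).descFactorial (Fintype.card β) := by
    rw [← Nat.card_coe_set_eq, ← Fintype.card_embedding_eq, ← Nat.card_eq_fintype_card]
    exact Nat.card_congr (Equiv.subtypeInjectiveEquivEmbedding β V)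
  have hunion : (A ∪ B).ncard ≤ Fintype.card V ^ Fintype.card β := by
    rw [← Fintype.card_fun, ← Nat.card_eq_fintype_card]
    exact Set.ncard_le_card _
  have hinter : (A ∩ B).ncard ≤ Nat.card (H.Copy G) := by
    rw [← Nat.card_range_of_injective (DFunLike.coe_injective (F := H.Copy G)),
      Nat.card_coe_set_eq]
    refine Set.ncard_le_ncard ?_
    rintro _ ⟨⟨f, rfl⟩, hf⟩
    exact ⟨f.toCopy hf, rfl⟩
  rw [← hA, ← hB, ← Set.ncard_union_add_ncard_inter, add_comm]
  exact Nat.add_le_add hinter hunion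

lemma pow_mul_one_sub_le_descFactorial {n : ℕ} (hn : n ≠ 0) (k : ℕ) :
    (n : ℝ) ^ k * (1 - k ^ 2 / n) ≤ n.descFactorial k := by
  have hn₀ : (0 : ℝ) < n := by positivity
  rcases le_total k n with hkn | hnk
  · have hk : (k : ℝ) / n ≤ 1 := div_le_one_of_le₀ (mod_cast hkn) hn₀.le
    calc (n : ℝ) ^ k * (1 - k ^ 2 / n) = (n : ℝ) ^ k * (1 + k * -(k / n)) := by ring
      _ ≤ (n : ℝ) ^ k * (1 + -(k / n)) ^ k := by
          gcongr
          exact one_add_mul_le_pow (by linarith) k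
      _ = ((n - k : ℕ) : ℝ) ^ k := by
          rw [← mul_pow, Nat.cast_sub hkn]
          congr 1
          field_simp
          ring
      _ ≤ ((n + 1 - k : ℕ) : ℝ) ^ k := by
          gcongr
          exact n.le_succ
      _ ≤ n.descFactorial k := mod_cast Nat.pow_sub_le_descFactorial n k
  · refine (mul_nonpos_of_nonneg_of_nonpos (by positivity) ?_).trans (Nat.cast_nonneg _)
    rw [sub_nonpos, one_le_div hn₀]
    exact mod_cast hnk.trans (Nat.le_self_pow two_ne_zero k)

lemma natCard_hom_sub_le_copyCount_mul_natCard_iso [Fintype β] [Fintype V] [Nonempty V] :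
    (Nat.card (H →g G) : ℝ) -
        (Fintype.card V : ℝ) ^ Fintype.card β * (Fintype.card β ^ 2 / Fintype.card V) ≤
      copyCount H G * Nat.card (H ≃g H) := by
  have hdesc := pow_mul_one_sub_le_descFactorial (Fintype.card_ne_zero (α := V)) (Fintype.card β)
  have hhom : (Nat.card (H →g G) + (Fintype.card V).descFactorial (Fintype.card β) : ℝ) ≤
      Nat.card (H.Copy G) + (Fintype.card V : ℝ) ^ Fintype.card β :=
    mod_cast natCard_hom_add_descFactorial_le
  have hcopy : (Nat.card (H.Copy G) : ℝ) ≤ copyCount H G * Nat.card (H ≃g H) :=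
    mod_cast natCard_copy_le_copyCount_mul_natCard_iso
  linarith

end CopyCount

lemma Abundant.of_le_natCard_hom {α β : Type*} [Fintype β] {F : SimpleGraph α} {H : SimpleGraph β}
    {c : ℝ} {p : ℕ} (hc : 0 < c) (hp : p ≠ 0)
    (h : ∀ ε : ℝ, 0 < ε → ε < 1 → ∀ n ≠ 0, ∀ G : SimpleGraph (Fin n), FarFromFree F G ε →
      c * ε ^ p * (n : ℝ) ^ Fintype.card β ≤ Nat.card (H →g G)) :
    Abundant F H := by
  have : Finite (H ≃g H) := DFunLike.finite _
  have hA : (0 : ℝ) < Nat.card (H ≃g H) := mod_cast Nat.card_pos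
  refine ⟨c / (2 * Nat.card (H ≃g H)), p, by positivity, by positivity, fun ε hε hε₁ ↦
    ⟨⌈2 * Fintype.card β ^ 2 / (c * ε ^ p)⌉₊ + 1, fun n hn G hG ↦ ?_⟩⟩
  have hn₀ : n ≠ 0 := by lia
  have : NeZero n := ⟨hn₀⟩
  have hsmall : (Fintype.card β : ℝ) ^ 2 / n ≤ c * ε ^ p / 2 := by
    have hle : 2 * (Fintype.card β : ℝ) ^ 2 / (c * ε ^ p) ≤ n :=
      (Nat.le_ceil _).trans (Nat.cast_le.2 (Nat.le_of_succ_le hn))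
    rw [div_le_iff₀ (by positivity)] at hle ⊢
    linarith
  have hcopy := natCard_hom_sub_le_copyCount_mul_natCard_iso (H := H) (G := G)
  rw [Fintype.card_fin] at hcopy
  rw [Real.rpow_natCast, Nat.card_eq_fintype_card (α := β), div_mul_eq_mul_div, div_mul_eq_mul_div,
    div_le_iff₀ (by positivity)]
  have hloss : (n : ℝ) ^ Fintype.card β * (Fintype.card β ^ 2 / n) ≤
      (n : ℝ) ^ Fintype.card β * (c * ε ^ p / 2) := by gcongr
  have hhom := h ε hε hε₁ n hn₀ G hG
  linarith

/-- If `F` has at least one edge, then every `F`-splittable graph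
is `F`-abundant. -/
theorem stmt_12 {α β : Type*} [Fintype α] [Fintype β]
    (F : SimpleGraph α) (H : SimpleGraph β)
    (hF : F.edgeSet.Nonempty) (hsplit : Splittable F H) :
    Abundant F H := by
  rw [SimpleGraph.edgeSet_nonempty] at hF
  obtain ⟨σ, hcut⟩ := hsplit.exists_hom_forall_hasUnicolouredCut hF
  obtain ⟨τ, hτ, hστ⟩ := exists_hom_forall_mem_support hF σ
  obtain ⟨p, hp, hbound⟩ := exists_compatibleProportionBound hF hτ
    (fun S hS ↦ (hcut S hS).congr hστ) univ
  have hm : 0 < F.edgeSet.ncard := (Set.ncard_pos).2 (SimpleGraph.edgeSet_nonempty.2 hF)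
  refine Abundant.of_le_natCard_hom (c := (F.edgeSet.ncard ^ p : ℝ)⁻¹) (by positivity) hp
    fun ε hε _ n hn G hG ↦ ?_
  have : NeZero n := ⟨hn⟩
  obtain ⟨𝓕, h𝓕, hhom, hdensity⟩ := hG.exists_edgeDetermined hF
  calc (F.edgeSet.ncard ^ p : ℝ)⁻¹ * ε ^ p * (n : ℝ) ^ Fintype.card β
      ≤ (F.edgeSet.ncard ^ p : ℝ)⁻¹ * (F.edgeSet.ncard * familyDensity 𝓕) ^ p *
          (n : ℝ) ^ Fintype.card β := by gcongr
    _ = (n : ℝ) ^ Fintype.card β * familyDensity 𝓕 ^ p := by rw [mul_pow]; field_simp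
    _ ≤ #(compatibleMaps H τ 𝓕 univ) := by simpa using hbound (Fin n) 𝓕 h𝓕
    _ ≤ Nat.card (H →g G) := mod_cast card_compatibleMaps_univ_le_natCard_hom τ hhom
end
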